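/- Let 𝔤 be a finite-dimensional complex simple Lie algebra of type F4 and let (e,h,f) be an sl2-triple in 𝔤 such that e is a distinguished nilpotent element with dim 𝔤^e = 12. Then the centre 𝔷(𝔤^e) of 𝔤^e has dimension 3, the eigenvalues of the restriction of ad h to 𝔷(𝔤^e) are 2 and 6 (the eigenvalue 6 occurring with multiplicity 2), and e satisfies property (P). -/

import Mathlib

open scoped ComplexOrder

/-- The centralizer `𝔤^e = {x ∈ 𝔤 : ⁅x, e⁆ = 0}` of an element `e`, as a Lie subalgebra. -/
def centralizer (L : Type*) [LieRing L] [LieAlgebra ℂ L] (e : L) : LieSubalgebra ℂ L where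
  carrier := {x : L | ⁅x, e⁆ = 0}
  add_mem' := fun {a b} ha hb => by
    simp only [Set.mem_setOf_eq] at *
    rw [add_lie, ha, hb, add_zero]
  zero_mem' := by simp
  smul_mem' := fun c a ha => by
    simp only [Set.mem_setOf_eq] at *
    rw [smul_lie, ha, smul_zero]
  lie_mem' := fun {a b} ha hb => by
    simp only [Set.mem_setOf_eq] at *
    simp [lie_lie, ha, hb]

/-- Membership in the centre `𝔷(𝔤^e)` of the centralizer of `e`:
`v` centralizes `e` and commutes with every element of `𝔤^e`. -/
def InCenterOfCentralizer (L : Type*) [LieRing L] [LieAlgebra ℂ L] (e v : L) : Prop :=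
  ⁅v, e⁆ = 0 ∧ ∀ y : L, ⁅y, e⁆ = 0 → ⁅v, y⁆ = 0

/-- The centre `𝔷(𝔤^e)` of the centralizer of `e`, as a subspace of `L`. -/
def zCenter (L : Type*) [LieRing L] [LieAlgebra ℂ L] (e : L) : Submodule ℂ L where
  carrier := {v : L | ⁅v, e⁆ = 0 ∧ ∀ y : L, ⁅y, e⁆ = 0 → ⁅v, y⁆ = 0}
  add_mem' := fun {a b} ha hb => ⟨by rw [add_lie, ha.1, hb.1, add_zero],
    fun y hy => by rw [add_lie, ha.2 y hy, hb.2 y hy, add_zero]⟩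
  zero_mem' := ⟨zero_lie e, fun y _ => zero_lie y⟩
  smul_mem' := fun c a ha => ⟨by rw [smul_lie, ha.1, smul_zero],
    fun y hy => by rw [smul_lie, ha.2 y hy, smul_zero]⟩

/-- Property (P) for an `sl₂`-triple `(e, h, f)`: for every nonzero `v ∈ 𝔷(𝔤^e)`, the
eigenspace `𝔷_max` of the restriction of `ad h` to `𝔷(𝔤^e)` for its largest eigenvalue is
contained in `[[f, 𝔤^e], v] = {⁅⁅f, x⁆, v⁆ : x ∈ 𝔤^e}`. -/
def PropertyP (L : Type*) [LieRing L] [LieAlgebra ℂ L] (e h f : L) : Prop :=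
  ∀ m : ℂ,
    (∃ z : L, z ≠ 0 ∧ InCenterOfCentralizer L e z ∧ ⁅h, z⁆ = m • z) →
    (∀ m' : ℂ, (∃ z : L, z ≠ 0 ∧ InCenterOfCentralizer L e z ∧ ⁅h, z⁆ = m' • z) → m' ≤ m) →
    ∀ v : L, InCenterOfCentralizer L e v → v ≠ 0 →
      ∀ z : L, InCenterOfCentralizer L e z → ⁅h, z⁆ = m • z →
        ∃ x : L, ⁅x, e⁆ = 0 ∧ ⁅⁅f, x⁆, v⁆ = z

/-- The stabilizer `{x ∈ 𝔮 : ξ(⁅x, y⁆) = 0 for all y ∈ 𝔮}` of a linear functional `ξ`. -/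
def coadStab (Q : Type*) [LieRing Q] [LieAlgebra ℂ Q] (ξ : Module.Dual ℂ Q) : Submodule ℂ Q where
  carrier := {x : Q | ∀ y : Q, ξ ⁅x, y⁆ = 0}
  add_mem' := fun {a b} ha hb y => by rw [add_lie, map_add, ha y, hb y, add_zero]
  zero_mem' := fun y => by rw [zero_lie, map_zero]
  smul_mem' := fun c a ha y => by rw [smul_lie, map_smul, ha y, smul_zero]

/-- The index of a complex Lie algebra:
`ind 𝔮 = min_{ξ ∈ 𝔮*} dim {x ∈ 𝔮 : ξ(⁅x, y⁆) = 0 for all y ∈ 𝔮}`. -/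
noncomputable def lieIndex (Q : Type*) [LieRing Q] [LieAlgebra ℂ Q] : ℕ :=
  ⨅ ξ : Module.Dual ℂ Q, Module.finrank ℂ ↥(coadStab Q ξ)

/-- A nilpotent element `e` is distinguished if the only `x ∈ 𝔤^e` such that `ad x` is a
semisimple endomorphism of `𝔤` is `x = 0`. -/
def IsDistinguished (L : Type*) [LieRing L] [LieAlgebra ℂ L] (e : L) : Prop :=
  ∀ x : L, ⁅x, e⁆ = 0 → (LieAlgebra.ad ℂ L x).IsSemisimple → x = 0

/-!
Let `𝔤ᵢ` be the eigenspaces of `ad h`. As `e` is distinguished, `h` is semisimple, `ad e` has no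
kernel on `𝔤₀`, and `dim 𝔤₀ = dim 𝔤₂`. Inner automorphisms of an explicit model of `𝔤` inside the
`27 × 27` matrices move `h` into the Cartan subalgebra and then into the dominant chamber, where
its values on the simple roots lie in `{0, 1, 2}`. Among these weighted diagrams the dimensions of
`𝔤₀ ⊕ 𝔤₁` and of `𝔤₂` leave only that of the orbit `F₄(a₃)`. The elements `x` of `𝔤₂` with
`[𝔤₀, x] = 𝔤₂` are conjugate under automorphisms fixing `h`: each of them has an open orbit in `𝔤₂`,
and all but finitely many points of the complex line through two of them are such elements. So `e`
can be taken to be an explicit sum of root vectors, for which the centre of `𝔤^e` and property (P)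
are read off from the structure constants.
-/

section InnerAutomorphisms

open Filter Topology

variable (L : Type*) [LieRing L] [LieAlgebra ℂ L] [FiniteDimensional ℂ L]

/-- A norm on a finite-dimensional complex Lie algebra, transported from a coordinate space. It is
only needed to make sense of the exponential series, so the choice of basis is irrelevant. -/
@[reducible] noncomputable def lieNormedAddCommGroup : NormedAddCommGroup L :=
  NormedAddCommGroup.induced L (Fin (Module.finrank ℂ L) → ℂ)
    ((Module.finBasis ℂ L).equivFun : L →ₗ[ℂ] _) (Module.finBasis ℂ L).equivFun.injective

/-- The normed space structure of the norm `lieNormedAddCommGroup`. -/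
@[reducible] noncomputable def lieNormedSpace :
    @NormedSpace ℂ L _ (lieNormedAddCommGroup L).toSeminormedAddCommGroup :=
  letI := lieNormedAddCommGroup L
  { norm_smul_le := fun a b => by
      change ‖(Module.finBasis ℂ L).equivFun (a • b)‖ ≤ ‖a‖ * ‖(Module.finBasis ℂ L).equivFun b‖
      rw [map_smul, norm_smul] }

attribute [local instance] lieNormedAddCommGroup lieNormedSpace

lemma lie_completeSpace : CompleteSpace L := FiniteDimensional.complete ℂ L

attribute [local instance] lie_completeSpace

/-- The adjoint representation as a continuous bilinear map. -/
noncomputable def adCLM : L →L[ℂ] L →L[ℂ] L :=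
  LinearMap.toContinuousLinearMap
    ((LinearMap.toContinuousLinearMap : (L →ₗ[ℂ] L) ≃ₗ[ℂ] (L →L[ℂ] L)).toLinearMap ∘ₗ
      (LieAlgebra.ad ℂ L : L →ₗ[ℂ] Module.End ℂ L))

variable {L}

@[simp] lemma adCLM_apply (u x : L) : adCLM L u x = ⁅u, x⁆ := rfl

lemma hasSum_exp_apply (D : L →L[ℂ] L) (x : L) :
    HasSum (fun n : ℕ => (n.factorial : ℂ)⁻¹ • (D ^ n) x) (NormedSpace.exp D x) :=
  (NormedSpace.exp_series_hasSum_exp' (𝕂 := ℂ) D).mapL (ContinuousLinearMap.apply ℂ L x)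

lemma exp_apply_of_apply_eq_smul {D : L →L[ℂ] L} {v : L} {c : ℂ} (h : D v = c • v) :
    NormedSpace.exp D v = Complex.exp c • v := by
  have hpow (n : ℕ) : (D ^ n) v = c ^ n • v := by
    induction n with
    | zero => simp
    | succ n ih => rw [pow_succ', mul_apply_eq_comp, ih, map_smul, h, smul_smul, pow_succ]
  have hsum : HasSum (fun n : ℕ => ((n.factorial : ℂ)⁻¹ • c ^ n) • v) (Complex.exp c • v) := by
    rw [Complex.exp_eq_exp_ℂ]
    exact (NormedSpace.exp_series_hasSum_exp' (𝕂 := ℂ) c).smul_const v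
  refine (hasSum_exp_apply D v).unique ?_
  simpa only [hpow, smul_smul, smul_eq_mul] using hsum

lemma exp_neg_apply_exp_apply (D : L →L[ℂ] L) (x : L) :
    NormedSpace.exp (-D) (NormedSpace.exp D x) = x := by
  let : NormedAlgebra ℚ (L →L[ℂ] L) := NormedAlgebra.restrictScalars ℚ ℂ _
  rw [← mul_apply_eq_comp, ← NormedSpace.exp_add_of_commute (Commute.neg_left (Commute.refl D)),
    neg_add_cancel, NormedSpace.exp_zero, one_apply_eq_self]

lemma exp_apply_exp_neg_apply (D : L →L[ℂ] L) (x : L) :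
    NormedSpace.exp D (NormedSpace.exp (-D) x) = x := by
  simpa using exp_neg_apply_exp_apply (-D) x

-- The function `t ↦ exp (-tD) ⁅exp (tD) a, exp (tD) b⁆` has zero derivative.
lemma exp_adCLM_lie (u a b : L) :
    NormedSpace.exp (adCLM L u) ⁅a, b⁆ =
      ⁅NormedSpace.exp (adCLM L u) a, NormedSpace.exp (adCLM L u) b⁆ := by
  set D := adCLM L u with hD
  have hexp (c : L) (t : ℂ) : HasDerivAt (fun t : ℂ => NormedSpace.exp (t • D) c)
      (D (NormedSpace.exp (t • D) c)) t := by
    simpa using (hasDerivAt_exp_smul_const' D t).clm_apply (hasDerivAt_const t c)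
  have hlie (t : ℂ) : HasDerivAt
      (fun t : ℂ => ⁅NormedSpace.exp (t • D) a, NormedSpace.exp (t • D) b⁆)
      (D ⁅NormedSpace.exp (t • D) a, NormedSpace.exp (t • D) b⁆) t := by
    refine (((adCLM L).hasFDerivAt.comp_hasDerivAt t (hexp a t)).clm_apply
      (hexp b t)).congr_deriv ?_
    simp [hD, lie_lie]
  have hconst (t : ℂ) : HasDerivAt (fun t : ℂ => NormedSpace.exp (t • (-D))
      ⁅NormedSpace.exp (t • D) a, NormedSpace.exp (t • D) b⁆) 0 t := by
    refine ((hasDerivAt_exp_smul_const (𝕂 := ℂ) (-D) t).clm_apply (hlie t)).congr_deriv ?_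
    simp
  have h10 := is_const_of_deriv_eq_zero (fun t => (hconst t).differentiableAt)
    (fun t => (hconst t).deriv) 1 0
  simp only [one_smul, zero_smul, NormedSpace.exp_zero, one_apply_eq_self] at h10
  rw [← h10, exp_apply_exp_neg_apply]

/-- The inner automorphism `exp (ad u)`. -/
noncomputable def expAut (u : L) : L ≃ₗ⁅ℂ⁆ L :=
  { (NormedSpace.exp (adCLM L u) : L →L[ℂ] L).toLinearMap with
    invFun := (NormedSpace.exp (-adCLM L u) : L →L[ℂ] L)
    left_inv := exp_neg_apply_exp_apply _
    right_inv := exp_apply_exp_neg_apply _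
    map_lie' := exp_adCLM_lie u _ _ }

lemma expAut_apply_of_lie_eq_smul {u v : L} {c : ℂ} (h : ⁅u, v⁆ = c • v) :
    expAut u v = Complex.exp c • v := exp_apply_of_apply_eq_smul (D := adCLM L u) h

lemma expAut_apply_of_lie_eq_zero {u v : L} (h : ⁅u, v⁆ = 0) : expAut u v = v := by
  simpa using expAut_apply_of_lie_eq_smul (c := 0) (h.trans (zero_smul ℂ v).symm)

lemma expAut_mem (T : Submodule ℂ L) {u : L} (hu : ∀ x ∈ T, ⁅u, x⁆ ∈ T) {x : L} (hx : x ∈ T) :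
    expAut u x ∈ T := by
  have hpow (n : ℕ) : (adCLM L u ^ n) x ∈ T := by
    induction n with
    | zero => exact hx
    | succ n ih => rw [pow_succ']; exact hu _ ih
  exact T.closed_of_finiteDimensional.mem_of_tendsto (hasSum_exp_apply (adCLM L u) x)
    (Eventually.of_forall fun s => T.sum_mem fun n _ => T.smul_mem _ (hpow n))

lemma hasStrictFDerivAt_exp_adCLM_apply (x : L) :
    HasStrictFDerivAt (fun p : L × L => NormedSpace.exp (adCLM L p.1) (x + p.2))
      ((adCLM L).flip x ∘L ContinuousLinearMap.fst ℂ L L + ContinuousLinearMap.snd ℂ L L) 0 := by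
  let A : L × L →L[ℂ] L →L[ℂ] L := adCLM L ∘L ContinuousLinearMap.fst ℂ L L
  have hexp : HasStrictFDerivAt (NormedSpace.exp : (L →L[ℂ] L) → (L →L[ℂ] L))
      (1 : (L →L[ℂ] L) →L[ℂ] (L →L[ℂ] L)) (A 0) := by
    rw [map_zero]
    exact hasStrictFDerivAt_exp_zero
  have hadd : HasStrictFDerivAt (fun p : L × L => x + p.2) (ContinuousLinearMap.snd ℂ L L) 0 :=
    (ContinuousLinearMap.snd ℂ L L).hasStrictFDerivAt.const_add x
  refine ((hexp.comp 0 A.hasStrictFDerivAt).clm_apply hadd).congr_fderiv ?_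
  ext p <;> simp [A, NormedSpace.exp_zero]

-- The map `(u, y) ↦ exp (ad u) (x + y)` from `U × Y` to `T` is a submersion at the origin.
lemma eventually_exists_expAut_eq (U Y T : Submodule ℂ L) (hY : Y ≤ T)
    (hU : ∀ u ∈ U, ∀ t ∈ T, ⁅u, t⁆ ∈ T) {x d : L} (hx : x ∈ T) (hd : d ∈ T)
    (h : ∀ t ∈ T, ∃ u ∈ U, ∃ y ∈ Y, ⁅u, x⁆ + y = t) :
    ∀ᶠ r in 𝓝 (0 : ℂ), ∃ u ∈ U, ∃ y ∈ Y, expAut u (x + y) = x + r • d := by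
  obtain ⟨p, hp⟩ := LinearMap.exists_leftInverse_of_injective T.subtype (by simp)
  let π : L →L[ℂ] T := LinearMap.toContinuousLinearMap p
  have hπ {t : L} (ht : t ∈ T) : (π t : L) = t :=
    congrArg Subtype.val (LinearMap.congr_fun hp ⟨t, ht⟩)
  let ι : U × Y →L[ℂ] L × L := U.subtypeL.prodMap Y.subtypeL
  let G : U × Y → T := fun q => π (expAut (q.1 : L) (x + q.2))
  have hG0 : G 0 = π x := congrArg π (by
    simpa using expAut_apply_of_lie_eq_zero (zero_lie x))
  have hG : HasStrictFDerivAt G (π ∘L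
      ((adCLM L).flip x ∘L ContinuousLinearMap.fst ℂ L L + ContinuousLinearMap.snd ℂ L L) ∘L ι)
      0 := by
    have hexp := hasStrictFDerivAt_exp_adCLM_apply x
    rw [← map_zero ι] at hexp
    exact π.hasStrictFDerivAt.comp 0 (hexp.comp 0 ι.hasStrictFDerivAt)
  have hsurj := hG.map_nhds_eq_of_surj <| LinearMap.range_eq_top.2 fun t => by
    obtain ⟨u, hu, y, hy, huy⟩ := h t t.2
    exact ⟨(⟨u, hu⟩, ⟨y, hy⟩), Subtype.ext ((hπ (huy.symm ▸ t.2 : ⁅u, x⁆ + y ∈ T)).trans huy)⟩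
  have hrange : ∀ᶠ w in 𝓝 (π x), ∃ q, G q = w := by
    rw [← hG0, ← hsurj]
    exact range_mem_map
  have htendsto : Tendsto (fun r : ℂ => π (x + r • d)) (𝓝 0) (𝓝 (π x)) := by
    simpa using (show Continuous fun r : ℂ => π (x + r • d) by fun_prop).tendsto 0
  filter_upwards [htendsto.eventually hrange] with r ⟨q, hq⟩
  refine ⟨q.1, q.1.2, q.2, q.2.2, ?_⟩
  have := congrArg Subtype.val hq
  rwa [hπ (expAut_mem T (hU _ q.1.2) (T.add_mem hx (hY q.2.2))),
    hπ (T.add_mem hx (T.smul_mem r hd))] at this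

end InnerAutomorphisms

section OpenOrbits

open Filter Topology

lemma rel_of_eventually_of_countable {E : Type*} [AddCommGroup E] [Module ℝ E]
    [TopologicalSpace E] [IsTopologicalAddGroup E] [ContinuousSMul ℝ E] (hE : 1 < Module.rank ℝ E)
    {S : Set E} (hS : S.Countable) (P : E → E → Prop)
    (h : ∀ x ∉ S, ∀ᶠ r in 𝓝 0, x + r ∉ S → P x (x + r))
    (htrans : ∀ x y z, P x y → P y z → P x z) (hsymm : ∀ x y, P x y → P y x)
    {x y : E} (hx : x ∉ S) (hy : y ∉ S) : P x y :=
  (hS.isConnected_compl_of_one_lt_rank hE).isPreconnected.induction₂ P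
    (fun x hx => eventually_nhdsWithin_iff.2 (by
      rw [← map_add_left_nhds_zero x, eventually_map]
      exact h x hx))
    (fun x y z _ _ _ => htrans x y z) (fun x y _ _ => hsymm x y) hx hy

lemma finite_setOf_not_surjective_add_smul {K V W : Type*} [Field K] [AddCommGroup V] [Module K V]
    [AddCommGroup W] [Module K W] [FiniteDimensional K W] {A : V →ₗ[K] W}
    (hA : Function.Surjective A) (B : V →ₗ[K] W) :
    {t : K | ¬ Function.Surjective (A + t • B)}.Finite := by
  obtain ⟨R, hR⟩ := LinearMap.exists_rightInverse_of_surjective A (LinearMap.range_eq_top.2 hA)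
  let X : Module.End K W := B ∘ₗ R
  refine ((Module.End.finite_spectrum X).image fun z => -z⁻¹).subset fun t ht => ?_
  rw [Set.mem_ofPred_eq] at ht
  have ht0 : t ≠ 0 := by
    rintro rfl
    exact ht (by simpa using hA)
  refine ⟨-t⁻¹, spectrum.mem_iff.2 fun hunit => ht fun w => ?_, by simp⟩
  obtain ⟨z, hz⟩ := ((Module.End.isUnit_iff _).1 hunit).2 (-(t⁻¹ • w))
  have hAR : A (R z) = z := LinearMap.congr_fun hR z
  have hBR : B (R z) = t⁻¹ • w - t⁻¹ • z := by
    have : (-t⁻¹) • z - B (R z) = -(t⁻¹ • w) := by simpa [X, sub_eq_add_neg] using hz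
    rw [eq_sub_iff_add_eq, ← neg_inj, ← this]
    simp [sub_eq_add_neg, add_comm]
  exact ⟨R z, by simp [hAR, hBR, smul_sub, smul_smul, mul_inv_cancel₀ ht0]⟩

variable {L : Type*} [LieRing L] [LieAlgebra ℂ L]

/-- The eigenspace of `ad s` for the eigenvalue `c`. -/
def adEigenspace (s : L) (c : ℂ) : Submodule ℂ L :=
  Module.End.eigenspace (LieAlgebra.ad ℂ L s) c

lemma mem_adEigenspace {s x : L} {c : ℂ} : x ∈ adEigenspace s c ↔ ⁅s, x⁆ = c • x := by
  simp [adEigenspace]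

lemma mem_adEigenspace_zero {s x : L} : x ∈ adEigenspace s 0 ↔ ⁅s, x⁆ = 0 := by
  simp [mem_adEigenspace]

lemma lie_mem_adEigenspace {s x y : L} {a b c : ℂ} (hx : x ∈ adEigenspace s a)
    (hy : y ∈ adEigenspace s b) (h : a + b = c) : ⁅x, y⁆ ∈ adEigenspace s c := by
  rw [mem_adEigenspace] at *
  rw [leibniz_lie, hx, hy, ← h, add_smul, smul_lie, lie_smul]

/-- The tangent space at `x` of the orbit of `x` under the centralizer of `s` contains the whole
eigenspace of `ad s` for the eigenvalue `c`; for `x` in that eigenspace, the orbit is open in it. -/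
def HasOpenOrbit (s : L) (c : ℂ) (x : L) : Prop :=
  ∀ y ∈ adEigenspace s c, ∃ u ∈ adEigenspace s 0, ⁅u, x⁆ = y

variable {s : L} {c : ℂ}

/-- The map `u ↦ ⁅u, x⁆` from the centralizer of `s` to an eigenspace of `ad s`. -/
def orbitTangentMap {x : L} (hx : x ∈ adEigenspace s c) : adEigenspace s 0 →ₗ[ℂ] adEigenspace s c :=
  ((LieAlgebra.ad ℂ L : L →ₗ[ℂ] Module.End ℂ L).flip x ∘ₗ
    (adEigenspace s 0).subtype).codRestrict _ fun u => lie_mem_adEigenspace u.2 hx (zero_add c)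

@[simp] lemma coe_orbitTangentMap {x : L} (hx : x ∈ adEigenspace s c) (u : adEigenspace s 0) :
    (orbitTangentMap hx u : L) = ⁅(u : L), x⁆ := rfl

lemma surjective_orbitTangentMap {x : L} (hx : x ∈ adEigenspace s c) :
    Function.Surjective (orbitTangentMap hx) ↔ HasOpenOrbit s c x :=
  ⟨fun h y hy => let ⟨u, hu⟩ := h ⟨y, hy⟩; ⟨u, u.2, congrArg Subtype.val hu⟩,
    fun h y => let ⟨u, hu, huy⟩ := h y y.2; ⟨⟨u, hu⟩, Subtype.ext huy⟩⟩

variable [FiniteDimensional ℂ L]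

lemma HasOpenOrbit.finite_setOf_not_hasOpenOrbit_add_smul {x d : L} (h : HasOpenOrbit s c x)
    (hx : x ∈ adEigenspace s c) (hd : d ∈ adEigenspace s c) :
    {t : ℂ | ¬ HasOpenOrbit s c (x + t • d)}.Finite := by
  convert finite_setOf_not_surjective_add_smul ((surjective_orbitTangentMap hx).2 h)
    (orbitTangentMap hd) using 4 with t
  rw [← surjective_orbitTangentMap (add_mem hx (Submodule.smul_mem _ t hd))]
  congr!
  ext u
  simp

lemma HasOpenOrbit.eventually_exists_aut_eq_add_smul {x d : L} (h : HasOpenOrbit s c x)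
    (hx : x ∈ adEigenspace s c) (hd : d ∈ adEigenspace s c) :
    ∀ᶠ r in 𝓝 (0 : ℂ), ∃ φ : L ≃ₗ⁅ℂ⁆ L, φ s = s ∧ φ x = x + r • d := by
  filter_upwards [eventually_exists_expAut_eq (adEigenspace s 0) ⊥ (adEigenspace s c) bot_le
    (fun u hu t ht => lie_mem_adEigenspace hu ht (zero_add c)) hx hd fun t ht =>
      let ⟨u, hu, hut⟩ := h t ht
      ⟨u, hu, 0, zero_mem _, by simpa using hut⟩] with r ⟨u, hu, y, hy, huy⟩
  rw [mem_adEigenspace_zero] at hu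
  rw [Submodule.mem_bot] at hy
  exact ⟨expAut u, expAut_apply_of_lie_eq_zero (by rw [← lie_skew, hu, neg_zero]),
    by simpa [hy] using huy⟩

-- On the line through `x₁` and `x₂` all but finitely many points have an open orbit, and the
-- complement of a finite set in `ℂ` is connected.
lemma HasOpenOrbit.exists_aut_eq {x₁ x₂ : L} (h₁ : HasOpenOrbit s c x₁)
    (h₂ : HasOpenOrbit s c x₂) (hx₁ : x₁ ∈ adEigenspace s c) (hx₂ : x₂ ∈ adEigenspace s c) :
    ∃ φ : L ≃ₗ⁅ℂ⁆ L, φ s = s ∧ φ x₁ = x₂ := by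
  have hd : x₂ - x₁ ∈ adEigenspace s c := sub_mem hx₂ hx₁
  let E : ℂ → L := fun t => x₁ + t • (x₂ - x₁)
  suffices ∃ φ : L ≃ₗ⁅ℂ⁆ L, φ s = s ∧ φ (E 0) = E 1 by simpa [E] using this
  refine rel_of_eventually_of_countable (by rw [Complex.rank_real_complex]; norm_num)
    (h₁.finite_setOf_not_hasOpenOrbit_add_smul hx₁ hd).countable
    (fun a b => ∃ φ : L ≃ₗ⁅ℂ⁆ L, φ s = s ∧ φ (E a) = E b) (fun a ha => ?_)
    (fun a b c ⟨φ, hφs, hφ⟩ ⟨ψ, hψs, hψ⟩ => ⟨φ.trans ψ, by simp [hφs, hψs], by simp [hφ, hψ]⟩)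
    (fun a b ⟨φ, hφs, hφ⟩ => ⟨φ.symm, by rw [LieEquiv.symm_apply_eq, hφs],
      by rw [LieEquiv.symm_apply_eq, hφ]⟩) (by simpa using h₁) (by simpa using h₂)
  have hEa : E a ∈ adEigenspace s c := add_mem hx₁ (Submodule.smul_mem _ a hd)
  filter_upwards [(not_not.1 ha : HasOpenOrbit s c (E a)).eventually_exists_aut_eq_add_smul hEa hd]
    with r ⟨φ, hφs, hφ⟩ _
  exact ⟨φ, hφs, by rw [hφ]; simp only [E]; module⟩

end OpenOrbits

section CartanConjugacy

open Filter Topology LieAlgebra LieSubalgebra Module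

section Field

variable {K L L' : Type*} [Field K] [LieRing L] [LieAlgebra K L] [LieRing L'] [LieAlgebra K L']

lemma apply_mem_engel_apply (φ : L ≃ₗ⁅K⁆ L') (x z : L) :
    φ z ∈ engel K (φ x) ↔ z ∈ engel K x := by
  have hpow (n : ℕ) : (ad K L' (φ x) ^ n) (φ z) = φ ((ad K L x ^ n) z) := by
    induction n with
    | zero => rfl
    | succ n ih =>
      rw [pow_succ', pow_succ', Module.End.mul_apply, Module.End.mul_apply, ih]
      exact (LieEquiv.map_lie φ _ _).symm
  simp only [mem_engel_iff, hpow, EmbeddingLike.map_eq_zero_iff]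

variable [FiniteDimensional K L]

lemma exists_lie_add_mem_engel (x t : L) : ∃ u : L, ∃ y ∈ engel K x, ⁅u, x⁆ + y = t := by
  obtain ⟨y, hy, z, hz, rfl⟩ := Submodule.mem_sup.1
    ((LinearMap.isCompl_iSup_ker_pow_iInf_range_pow (ad K L x)).sup_eq_top ▸ Submodule.mem_top :
      t ∈ (⨆ n, (ad K L x ^ n).ker) ⊔ ⨅ n, (ad K L x ^ n).range)
  obtain ⟨u, hu⟩ := (Submodule.mem_iInf _).1 hz 1
  have hker : (⨆ n, (ad K L x ^ n).ker) ≤ (engel K x).toSubmodule :=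
    iSup_le fun n w hw => (mem_engel_iff K x w).2 ⟨n, hw⟩
  exact ⟨-u, y, hker hy, by simp [← hu, add_comm]⟩

lemma finite_setOf_not_isRegular_add_smul {x : L} (hx : IsRegular K x) (d : L) :
    {t : K | ¬ IsRegular K (x + t • d)}.Finite := by
  classical
  let b := Module.finBasis K L
  obtain ⟨p, hp⟩ : ∃ p : MvPolynomial (Fin (finrank K L)) K, ∀ y : L,
      IsRegular K y ↔ MvPolynomial.eval (b.repr y) p ≠ 0 :=
    ⟨_, fun y => isRegular_iff_coeff_polyCharpoly_rank_ne_zero K b y⟩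
  let q : Polynomial K := MvPolynomial.aeval
    (fun i => Polynomial.C (b.repr x i) + Polynomial.X * Polynomial.C (b.repr d i)) p
  have hq (t : K) : q.eval t = MvPolynomial.eval (b.repr (x + t • d)) p := by
    rw [← Polynomial.coe_evalRingHom, MvPolynomial.map_aeval, MvPolynomial.eval,
      MvPolynomial.coe_eval₂Hom]
    congr 1 <;> ext i <;> simp [mul_comm t]
  have hq0 : q ≠ 0 := by
    rintro h0
    exact (hp x).1 hx (by simpa [h0] using (hq 0).symm)
  refine q.roots.toFinset.finite_toSet.subset fun t ht => ?_
  simpa [hq0, hq, hp] using ht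

lemma isCartanSubalgebra_engel_of_isRegular {x : L} (hx : IsRegular K x)
    (hcard : finrank K L ≤ Cardinal.mk K) : (engel K x).IsCartanSubalgebra := by
  have hmin (y : L) (hyx : engel K y ≤ engel K x) : engel K x ≤ engel K y := by
    refine (LieSubalgebra.toSubmodule_injective
      (Submodule.eq_of_le_of_finrank_le ((toSubmodule_le_toSubmodule _ _).2 hyx) ?_)).ge
    exact ((isRegular_iff_finrank_engel_eq_rank K x).1 hx).trans_le (rank_le_finrank_engel K y)
  refine ⟨isNilpotent_of_forall_le_engel _ fun y hy => ?_, normalizer_engel K x⟩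
  exact engel_isBot_of_isMin hcard _ ⟨_, x, self_mem_engel K x, rfl⟩ le_rfl
    (by rintro ⟨_, z, -, rfl⟩; exact hmin z) ⟨_, y, hy, rfl⟩

variable [IsKilling K L]

lemma lie_eq_zero_of_mem_isCartanSubalgebra {H : LieSubalgebra K L} (hH : H.IsCartanSubalgebra)
    {x y : L} (hx : x ∈ H) (hy : y ∈ H) : ⁅x, y⁆ = 0 := by
  have := IsKilling.instIsLieAbelianOfIsCartanSubalgebra K L H
  exact congrArg Subtype.val (this.trivial (⟨x, hx⟩ : H) ⟨y, hy⟩)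

lemma apply_mem_engel_apply_iff_of_isCartanSubalgebra {x y : L} (φ : L ≃ₗ⁅K⁆ L)
    (hx : (engel K x).IsCartanSubalgebra) (hy : y ∈ engel K x)
    (hφy : (engel K (φ y)).IsCartanSubalgebra) (w : L) :
    φ w ∈ engel K (φ y) ↔ w ∈ engel K x := by
  have hle : ∀ w ∈ engel K x, φ w ∈ engel K (φ y) := fun w hw => by
    rw [apply_mem_engel_apply, mem_engel_iff]
    exact ⟨1, by simpa using lie_eq_zero_of_mem_isCartanSubalgebra hx hy hw⟩
  refine ⟨fun hw => ?_, hle w⟩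
  rw [← hx.self_normalizing, mem_normalizer_iff]
  intro v hv
  suffices ⁅w, v⁆ = 0 from this ▸ zero_mem _
  exact φ.injective ((LieEquiv.map_lie φ w v).trans
    ((lie_eq_zero_of_mem_isCartanSubalgebra hφy hw (hle v hv)).trans (map_zero φ).symm))

end Field

variable {L : Type*} [LieRing L] [LieAlgebra ℂ L] [FiniteDimensional ℂ L] [IsKilling ℂ L]

lemma eventually_exists_aut_engel {x : L} (hx : (engel ℂ x).IsCartanSubalgebra) (d : L) :
    ∀ᶠ r in 𝓝 (0 : ℂ), (engel ℂ (x + r • d)).IsCartanSubalgebra →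
      ∃ φ : L ≃ₗ⁅ℂ⁆ L, ∀ w, φ w ∈ engel ℂ (x + r • d) ↔ w ∈ engel ℂ x := by
  filter_upwards [eventually_exists_expAut_eq ⊤ (engel ℂ x).toSubmodule ⊤ le_top
    (fun _ _ _ _ => Submodule.mem_top) (x := x) (d := d) Submodule.mem_top Submodule.mem_top
    fun t _ => let ⟨u, hu⟩ := exists_lie_add_mem_engel x t; ⟨u, Submodule.mem_top, hu⟩]
    with r ⟨u, _, y, hy, hu⟩ hr
  rw [← hu] at hr ⊢
  exact ⟨expAut u, apply_mem_engel_apply_iff_of_isCartanSubalgebra _ hx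
    (add_mem (self_mem_engel ℂ x) hy) hr⟩

lemma exists_aut_engel_of_isRegular {x y : L} (hx : IsRegular ℂ x)
    (hy : (engel ℂ y).IsCartanSubalgebra) :
    ∃ φ : L ≃ₗ⁅ℂ⁆ L, ∀ w, φ w ∈ engel ℂ y ↔ w ∈ engel ℂ x := by
  have hcartan {z : L} (hz : IsRegular ℂ z) : (engel ℂ z).IsCartanSubalgebra :=
    isCartanSubalgebra_engel_of_isRegular hz
      (Cardinal.natCast_le_aleph0.trans (Cardinal.infinite_iff.1 inferInstance))
  let E : ℂ → L := fun t => x + t • (y - x)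
  suffices ∃ φ : L ≃ₗ⁅ℂ⁆ L, ∀ w, φ w ∈ engel ℂ (E 1) ↔ w ∈ engel ℂ (E 0) by
    simpa [E] using this
  refine rel_of_eventually_of_countable (S := {t | ¬ (engel ℂ (E t)).IsCartanSubalgebra})
    (by rw [Complex.rank_real_complex]; norm_num)
    ((finite_setOf_not_isRegular_add_smul hx (y - x)).subset
      fun _ => mt hcartan).countable
    (fun a b => ∃ φ : L ≃ₗ⁅ℂ⁆ L, ∀ w, φ w ∈ engel ℂ (E b) ↔ w ∈ engel ℂ (E a)) (fun a ha => ?_)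
    (fun a b c ⟨φ, hφ⟩ ⟨ψ, hψ⟩ => ⟨φ.trans ψ, fun w => (hψ _).trans (hφ w)⟩)
    (fun a b ⟨φ, hφ⟩ => ⟨φ.symm, fun w => by simp [← hφ]⟩)
    (by simpa [E] using hcartan hx) (by simpa [E] using hy)
  filter_upwards [eventually_exists_aut_engel (not_not.1 ha) (y - x)] with r hr
  simpa only [E, add_smul, add_assoc, Set.mem_ofPred_eq, not_not] using hr

/-- **Conjugacy of Cartan subalgebras** for a complex Lie algebra with nondegenerate Killing form;
every Cartan subalgebra of such an algebra has the form `engel ℂ x`. -/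
theorem exists_aut_engel {x y : L}
    (hx : (engel ℂ x).IsCartanSubalgebra) (hy : (engel ℂ y).IsCartanSubalgebra) :
    ∃ φ : L ≃ₗ⁅ℂ⁆ L, ∀ w, φ w ∈ engel ℂ y ↔ w ∈ engel ℂ x := by
  obtain ⟨z, hz⟩ := exists_isRegular ℂ L
  obtain ⟨φ, hφ⟩ := exists_aut_engel_of_isRegular hz hx
  obtain ⟨ψ, hψ⟩ := exists_aut_engel_of_isRegular hz hy
  exact ⟨φ.symm.trans ψ, fun w => by simp [hψ, ← hφ]⟩

end CartanConjugacy

section JordanDecomposition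

open LieAlgebra LieSubalgebra Module

lemma exists_mem_apply_eq_smul {K V : Type*} [Field K] [IsAlgClosed K] [AddCommGroup V]
    [Module K V] [FiniteDimensional K V] {f : End K V} {W : Submodule K V} (hW : W ≠ ⊥)
    (hf : ∀ w ∈ W, f w ∈ W) : ∃ w ∈ W, w ≠ 0 ∧ ∃ c : K, f w = c • w := by
  have : Nontrivial W := Submodule.nontrivial_iff_ne_bot.2 hW
  obtain ⟨c, hc⟩ := End.exists_eigenvalue (f.restrict hf)
  obtain ⟨w, hw⟩ := hc.exists_hasEigenvector
  exact ⟨w, w.2, fun h => hw.2 (Subtype.ext h), c, congrArg Subtype.val hw.apply_eq_smul⟩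

-- For `t` outside a finite set, `S` has no nonzero eigenvalue on the kernel of a power of `X + tS`.
lemma exists_maxGenEigenspace_add_smul_le_ker {K V : Type*} [Field K] [IsAlgClosed K]
    [AddCommGroup V] [Module K V] [FiniteDimensional K V] {X S : End K V} (hXS : Commute X S)
    (hS : S.IsSemisimple) : ∃ t : K, (X + t • S).maxGenEigenspace 0 ≤ LinearMap.ker S := by
  obtain ⟨t, ht⟩ : ∃ t, t ∉ (fun q : K × K => -q.1 / q.2) '' (spectrum K X ×ˢ spectrum K S) :=
    (((End.finite_spectrum X).prod (End.finite_spectrum S)).image _).exists_notMem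
  refine ⟨t, fun z hz => ?_⟩
  have hcommX : Commute (X + t • S) X := (Commute.refl X).add_left (hXS.symm.smul_left t)
  have hcommS : Commute (X + t • S) S := hXS.add_left ((Commute.refl S).smul_left t)
  have hmapsS : Set.MapsTo S ((X + t • S).maxGenEigenspace 0) ((X + t • S).maxGenEigenspace 0) :=
    End.mapsTo_maxGenEigenspace_of_comm hcommS 0
  suffices hzero : S.restrict hmapsS = 0 from
    congrArg Subtype.val (LinearMap.congr_fun hzero ⟨z, hz⟩)
  rw [(hS.restrict (hp := hmapsS)).eq_zero_iff_forall_eigenvalue]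
  intro a ha
  obtain ⟨v, hv⟩ := ha.exists_hasEigenvector
  have hne : (X + t • S).maxGenEigenspace 0 ⊓ S.eigenspace a ≠ ⊥ := fun hbot =>
    hv.2 (Subtype.ext ((Submodule.eq_bot_iff _).1 hbot v
      ⟨v.2, End.mem_eigenspace_iff.2 (congrArg Subtype.val hv.apply_eq_smul)⟩))
  obtain ⟨w, ⟨hwgen, hwS⟩, hw0, b, hwX⟩ := exists_mem_apply_eq_smul (f := X) hne fun w hw =>
    ⟨End.mapsTo_maxGenEigenspace_of_comm hcommX 0 hw.1,
      End.mapsTo_genEigenspace_of_comm hXS.symm a 1 hw.2⟩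
  have hwS' : S w = a • w := End.mem_eigenspace_iff.1 hwS
  have hb : b + t * a = 0 := by
    have hvec : (X + t • S).HasEigenvector (b + t * a) w :=
      ⟨End.mem_eigenspace_iff.2 (by simp [hwX, hwS', add_smul, smul_smul]), hw0⟩
    obtain ⟨k, hk⟩ := End.mem_maxGenEigenspace _ _ _ |>.1 hwgen
    rw [zero_smul, sub_zero, hvec.pow_apply, smul_eq_zero] at hk
    exact eq_zero_of_pow_eq_zero (hk.resolve_right hw0)
  by_contra ha0
  refine ht ⟨(b, a), ⟨?_, ?_⟩, by field_simp; linear_combination -hb⟩ <;>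
    refine (End.hasEigenvalue_of_hasEigenvector ⟨?_, hw0⟩).mem_spectrum
  · exact End.mem_eigenspace_iff.2 hwX
  · exact hwS

lemma mem_engel_iff_of_isSemisimple {K L : Type*} [Field K] [LieRing L] [LieAlgebra K L] {s : L}
    (hs : (ad K L s).IsSemisimple) {z : L} :
    z ∈ engel K s ↔ ⁅s, z⁆ = 0 := by
  change z ∈ (ad K L s).maxGenEigenspace 0 ↔ _
  rw [hs.isFinitelySemisimple.maxGenEigenspace_eq_eigenspace]
  simp

section AlgClosed

variable {K L : Type*} [Field K] [IsAlgClosed K] [LieRing L] [LieAlgebra K L]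
  [FiniteDimensional K L]

lemma apply_lie_of_forall_apply_eq_smul {h : L} {S : End K L}
    (hS : ∀ c, ∀ x ∈ (ad K L h).maxGenEigenspace c, S x = c • x) (x y : L) :
    S ⁅x, y⁆ = ⁅S x, y⁆ + ⁅x, S y⁆ := by
  have hmem (z : L) : z ∈ ⨆ c, (ad K L h).maxGenEigenspace c := by
    simp [End.iSup_maxGenEigenspace_eq_top]
  induction hmem x using Submodule.iSup_induction' with
  | zero => simp
  | add x₁ x₂ _ _ h₁ h₂ => simp only [add_lie, map_add, h₁, h₂]; abel
  | mem a x hx =>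
    induction hmem y using Submodule.iSup_induction' with
    | zero => simp
    | add y₁ y₂ _ _ h₁ h₂ => simp only [lie_add, map_add, h₁, h₂]; abel
    | mem b y hy =>
      rw [hS a x hx, hS b y hy,
        hS _ _ (LieModule.lie_mem_maxGenEigenspace_toEnd (R := K) (x := h) hx hy),
        add_smul, smul_lie, lie_smul]

lemma exists_jordan_decomposition [IsKilling K L] (h : L) :
    ∃ s n : L, s + n = h ∧ (ad K L s).IsSemisimple ∧ IsNilpotent (ad K L n) ∧
      ∀ (x : L) (c : K), ⁅h, x⁆ = c • x → ⁅s, x⁆ = c • x := by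
  obtain ⟨N, -, S, hS_adjoin, hN, hS, hNS⟩ := (ad K L h).exists_isNilpotent_isSemisimple
  have hScalar : ∀ c, ∀ x ∈ (ad K L h).maxGenEigenspace c, S x = c • x := fun c x hx =>
    End.apply_eq_of_mem_of_comm_of_isFinitelySemisimple_of_isNil hx
      (Algebra.commute_of_mem_adjoin_self hS_adjoin) hS.isFinitelySemisimple
      (by rw [hNS]; simpa using hN)
  obtain ⟨s, hs⟩ := LieDerivation.IsKilling.exists_eq_ad (⟨S, fun x y => by
    rw [apply_lie_of_forall_apply_eq_smul hScalar, ← lie_skew y, sub_neg_eq_add, add_comm]⟩ :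
      LieDerivation K L L)
  have hsS : ad K L s = S := LinearMap.ext fun x => by
    simpa using LieDerivation.congr_fun hs x
  refine ⟨s, h - s, add_sub_cancel s h, hsS ▸ hS, ?_, fun x c hx => ?_⟩
  · rw [map_sub, hsS, hNS]
    simpa using hN
  · rw [← ad_apply K, hsS]
    exact hScalar c x ((End.mem_maxGenEigenspace _ _ _).2 ⟨1, by simp [hx]⟩)

-- An Engel Cartan subalgebra `engel x` of the centralizer of `s` becomes the Engel subalgebra of
-- `x + ts` in `L` for generic `t`.
lemma exists_isCartanSubalgebra_engel_mem [CharZero K] {s : L} (hs : (ad K L s).IsSemisimple) :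
    ∃ y : L, (engel K y).IsCartanSubalgebra ∧ s ∈ engel K y := by
  set C := engel K s
  have hC {z : L} (hz : z ∈ C) : ⁅s, z⁆ = 0 := (mem_engel_iff_of_isSemisimple hs).1 hz
  obtain ⟨⟨x, hxC⟩, hx⟩ := exists_isCartanSubalgebra_engel K C
  have hxs : ⁅x, s⁆ = 0 := by rw [← lie_skew, hC hxC, neg_zero]
  obtain ⟨t, ht⟩ := exists_maxGenEigenspace_add_smul_le_ker (X := ad K L x) (S := ad K L s)
    (LinearMap.ext fun z => by simp [leibniz_lie x s, hxs]) hs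
  rw [← map_smul, ← map_add] at ht
  have hle : engel K (x + t • s) ≤ C := fun z hz =>
    (mem_engel_iff_of_isSemisimple hs).2 (ht hz)
  have hmem (z : engel K (x + t • s)) : inclusion hle z ∈ engel K (⟨x, hxC⟩ : C) := by
    have hpow (k : ℕ) : ((ad K C ⟨x, hxC⟩ ^ k) (inclusion hle z) : L) =
        (ad K L (x + t • s) ^ k) z := by
      induction k with
      | zero => rfl
      | succ k ih =>
        rw [pow_succ', pow_succ', End.mul_apply, End.mul_apply, ← ih, ad_apply, ad_apply,
          LieSubalgebra.coe_bracket, add_lie, smul_lie, hC (Subtype.mem _), smul_zero, add_zero]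
    obtain ⟨k, hk⟩ := (mem_engel_iff K _ _).1 z.2
    exact (mem_engel_iff K _ _).2 ⟨k, Subtype.ext ((hpow k).trans hk)⟩
  let ι : engel K (x + t • s) →ₗ⁅K⁆ engel K (⟨x, hxC⟩ : C) :=
    { (inclusion hle : engel K (x + t • s) →ₗ[K] C).codRestrict _ hmem with
      map_lie' := fun {a b} => Subtype.ext (LieHom.map_lie (inclusion hle) a b) }
  have hι : Function.Injective ι := fun z w hzw =>
    inclusion_injective hle (congrArg Subtype.val hzw)
  have := hx.nilpotent
  exact ⟨x + t • s, ⟨hι.lieAlgebra_isNilpotent, normalizer_engel _ _⟩,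
    (mem_engel_iff K _ _).2 ⟨1, by simp [hxs]⟩⟩

end AlgClosed

end JordanDecomposition

section DistinguishedTriples

open LieAlgebra LieSubalgebra Module

lemma exists_eq_add_sub_smul_of_isSemisimple {K V : Type*} [Field K] [AddCommGroup V]
    [Module K V] [FiniteDimensional K V] {f : End K V} (hf : f.IsSemisimple) {W : Submodule K V}
    (hW : ∀ w ∈ W, f w ∈ W) (c : K) {w : V} (hw : w ∈ W) :
    ∃ k ∈ W, ∃ u ∈ W, f k = c • k ∧ w = k + (f u - c • u) := by
  let r : End K W := f.restrict hW
  let g : End K W := r - c • 1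
  obtain ⟨k, hk, z, hz, hkz⟩ := Submodule.mem_sup.1
    ((LinearMap.isCompl_iSup_ker_pow_iInf_range_pow g).sup_eq_top ▸ Submodule.mem_top :
      (⟨w, hw⟩ : W) ∈ (⨆ n, (g ^ n).ker) ⊔ ⨅ n, (g ^ n).range)
  have hker : (⨆ n, (g ^ n).ker) ≤ r.eigenspace c := by
    rw [← (hf.restrict (hp := hW)).isFinitelySemisimple.maxGenEigenspace_eq_eigenspace]
    exact iSup_le fun n y hy => (End.mem_maxGenEigenspace _ _ _).2 ⟨n, hy⟩
  obtain ⟨u, rfl⟩ := (Submodule.mem_iInf _).1 hz 1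
  refine ⟨k, k.2, u, u.2, congrArg Subtype.val (End.mem_eigenspace_iff.1 (hker hk)), ?_⟩
  simpa [g, r] using (congrArg Subtype.val hkz).symm

section Field

variable {K L : Type*} [Field K] [LieRing L] [LieAlgebra K L]

lemma killingForm_eq_zero_of_isNilpotent_of_lie_eq_zero {x y : L} (hx : IsNilpotent (ad K L x))
    (hxy : ⁅x, y⁆ = 0) : killingForm K L x y = 0 := by
  have hcomm : Commute (ad K L x) (ad K L y) := LinearMap.ext fun z => by
    simp [leibniz_lie x y, hxy]
  exact (LinearMap.isNilpotent_trace_of_isNilpotent (hcomm.isNilpotent_mul_right hx)).eq_zero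

variable [FiniteDimensional K L]

lemma exists_ne_zero_lie_eq_zero_of_forall_isNilpotent (A : LieSubalgebra K L)
    (hA : ∀ x ∈ A, IsNilpotent (ad K L x)) {x : L} (hx : x ∈ A) (hx0 : x ≠ 0) :
    ∃ z ∈ A, z ≠ 0 ∧ ∀ y ∈ A, ⁅z, y⁆ = 0 := by
  have : LieRing.IsNilpotent A := (LieAlgebra.isNilpotent_iff_forall (R := K)).2 fun y =>
    LieSubalgebra.isNilpotent_ad_of_isNilpotent_ad A (hA y y.2)
  have : Nontrivial A := ⟨⟨x, hx⟩, 0, fun h => hx0 (congrArg Subtype.val h)⟩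
  have := LieModule.nontrivial_max_triv_of_isNilpotent K A A
  obtain ⟨⟨z, hz⟩, hz0⟩ := exists_ne (0 : LieModule.maxTrivSubmodule K A A)
  refine ⟨z, z.2, fun h => hz0 (Subtype.ext (Subtype.ext h)), fun y hy => ?_⟩
  rw [← lie_skew, neg_eq_zero]
  exact congrArg Subtype.val (hz ⟨y, hy⟩)

-- The image of `ad e` is the orthogonal complement of its kernel for the Killing form.
lemma exists_lie_eq_of_forall_killingForm_eq_zero [IsKilling K L] {e t : L}
    (h : ∀ z, ⁅e, z⁆ = 0 → killingForm K L z t = 0) : ∃ u, ⁅e, u⁆ = t := by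
  by_contra! hne
  obtain ⟨g, hg, hle⟩ := Submodule.exists_le_ker_of_notMem
    (p := LinearMap.range (ad K L e)) (v := t) fun ⟨u, hu⟩ => hne u hu
  have hnd := IsKilling.killingForm_nondegenerate K L
  let z := (LinearMap.BilinForm.toDual (killingForm K L) hnd).symm g
  have hz (x : L) : killingForm K L z x = g x :=
    LinearMap.BilinForm.apply_toDual_symm_apply g x
  have hze : ⁅z, e⁆ = 0 := hnd.1 _ fun x => by
    rw [killingForm, LieModule.traceForm_apply_lie_apply, ← killingForm, hz]
    exact hle ⟨x, rfl⟩
  exact hg ((hz t).symm.trans (h z (by rw [← lie_skew, hze, neg_zero])))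

-- The functional `killingForm t` on the kernel of `ad e` kills the image of `ad s + c`.
lemma killingForm_eq_zero_of_forall_lie_eq_neg_smul {s e t z : L} {a c : K}
    (hs : (ad K L s).IsSemisimple) (hse : ⁅s, e⁆ = a • e) (hst : ⁅s, t⁆ = c • t)
    (h : ∀ k, ⁅e, k⁆ = 0 → ⁅s, k⁆ = -c • k → killingForm K L k t = 0) (hez : ⁅e, z⁆ = 0) :
    killingForm K L z t = 0 := by
  obtain ⟨k, hek, u, -, hsk, rfl⟩ := exists_eq_add_sub_smul_of_isSemisimple hs
    (W := LinearMap.ker (ad K L e)) (fun w hw => by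
      rw [LinearMap.mem_ker, ad_apply] at hw ⊢
      rw [ad_apply, leibniz_lie, ← lie_skew e s, hse]
      simp [hw]) (-c) hez
  have hsu : killingForm K L ⁅s, u⁆ t = -c * killingForm K L u t := by
    rw [← lie_skew, map_neg, LinearMap.neg_apply, killingForm, LieModule.traceForm_apply_lie_apply,
      hst, map_smul, smul_eq_mul, neg_mul]
  simp [h k hek hsk, hsu]

lemma exists_lie_eq_sub_smul_of_lie_eq {s e t y : L} {a c : K} (hs : (ad K L s).IsSemisimple)
    (hse : ⁅s, e⁆ = a • e) (hst : ⁅s, t⁆ = c • t) (hey : ⁅e, y⁆ = t) :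
    ∃ u, ⁅s, u⁆ = (c - a) • u ∧ ⁅e, u⁆ = t := by
  have hes : ⁅e, s⁆ = -(a • e) := by rw [← lie_skew, hse]
  obtain ⟨k, -, u, hu, hsk, rfl⟩ := exists_eq_add_sub_smul_of_isSemisimple hs
    (W := (K ∙ t).comap (ad K L e)) (fun w hw => by
      obtain ⟨b, hb⟩ := Submodule.mem_span_singleton.1 hw
      refine Submodule.mem_span_singleton.2 ⟨b * c - a * b, ?_⟩
      rw [ad_apply] at hb
      rw [ad_apply, ad_apply, leibniz_lie, hes, ← hb, lie_smul, hst, neg_lie, smul_lie, ← hb]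
      module) (c - a) (Submodule.mem_span_singleton.2 ⟨1, by rw [ad_apply, hey, one_smul]⟩)
  obtain ⟨b, hb⟩ := Submodule.mem_span_singleton.1 hu
  rw [ad_apply] at hb
  refine ⟨k, hsk, ?_⟩
  rw [← hey, lie_add, lie_sub, left_eq_add, ad_apply, leibniz_lie, hes, lie_smul, neg_lie, smul_lie,
    ← hb, lie_smul, hst]
  module

lemma exists_lie_eq_sub_smul [IsKilling K L] {s e t : L} {a c : K} (hs : (ad K L s).IsSemisimple)
    (hse : ⁅s, e⁆ = a • e) (hst : ⁅s, t⁆ = c • t)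
    (h : ∀ k, ⁅e, k⁆ = 0 → ⁅s, k⁆ = -c • k → killingForm K L k t = 0) :
    ∃ u, ⁅s, u⁆ = (c - a) • u ∧ ⁅e, u⁆ = t :=
  let ⟨_, hy⟩ := exists_lie_eq_of_forall_killingForm_eq_zero fun _ =>
    killingForm_eq_zero_of_forall_lie_eq_neg_smul hs hse hst h
  exists_lie_eq_sub_smul_of_lie_eq hs hse hst hy

end Field

variable {L : Type*} [LieRing L] [LieAlgebra ℂ L]

lemma lie_eq_zero_comm {M : Type*} [LieRing M] {x y : M} : ⁅x, y⁆ = 0 ↔ ⁅y, x⁆ = 0 := by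
  rw [← lie_skew, neg_eq_zero]

lemma mem_centralizer {e x : L} : x ∈ centralizer L e ↔ ⁅x, e⁆ = 0 := Iff.rfl

variable [FiniteDimensional ℂ L]

-- Modulo the trivial `sl₂`-module spanned by `z`, the vector `y` is primitive of weight `μ`.
lemma eq_zero_of_lie_mem_span_of_ne_natCast {h e f y z : L} (ht : IsSl2Triple h e f)
    (hez : ⁅e, z⁆ = 0) (hfz : ⁅f, z⁆ = 0) {μ : ℂ} (hμ : ∀ n : ℕ, μ ≠ n) (hy : ⁅h, y⁆ = μ • y)
    (hey : ⁅e, y⁆ ∈ ℂ ∙ z) : y = 0 := by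
  have hhz : ⁅h, z⁆ = 0 := by rw [← ht.lie_e_f, lie_lie, hez, hfz, lie_zero, lie_zero, sub_zero]
  let N : LieSubmodule ℂ (centralizer L z) L :=
    { ℂ ∙ z with
      lie_mem := fun {x m} hm => by
        obtain ⟨a, rfl⟩ := Submodule.mem_span_singleton.1 hm
        rw [lie_smul, LieSubalgebra.coe_bracket_of_module, mem_centralizer.1 x.2, smul_zero]
        exact Submodule.zero_mem _ }
  have htC : IsSl2Triple (L := centralizer L z) ⟨h, hhz⟩ ⟨e, hez⟩ ⟨f, hfz⟩ :=
    ⟨fun h0 => ht.h_ne_zero (congrArg Subtype.val h0), Subtype.ext ht.lie_e_f,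
      Subtype.ext ht.lie_h_e_nsmul, Subtype.ext ht.lie_h_f_nsmul⟩
  have hyN : (LieSubmodule.Quotient.mk y : L ⧸ N) = 0 := by
    by_contra hne
    have hprim : htC.HasPrimitiveVectorWith (LieSubmodule.Quotient.mk y : L ⧸ N) μ :=
      ⟨hne, congrArg LieSubmodule.Quotient.mk hy, (LieSubmodule.Quotient.mk_eq_zero'.2 hey)⟩
    obtain ⟨n, hn⟩ := hprim.exists_nat
    exact hμ n hn
  obtain ⟨a, rfl⟩ := Submodule.mem_span_singleton.1 (LieSubmodule.Quotient.mk_eq_zero'.1 hyN)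
  rw [lie_smul, hhz, smul_zero, eq_comm, smul_eq_zero] at hy
  exact hy.resolve_left (mod_cast hμ 0)

variable [IsKilling ℂ L] {e : L}

lemma IsDistinguished.isNilpotent_ad (he : IsDistinguished L e) {x : L} (hx : ⁅x, e⁆ = 0) :
    IsNilpotent (ad ℂ L x) := by
  obtain ⟨s, n, rfl, hs, hn, heig⟩ := exists_jordan_decomposition (K := ℂ) x
  rwa [he s (by simpa using heig e 0 (by simpa using hx)) hs, zero_add]

lemma eq_zero_of_lie_eq_zero_of_forall_killingForm_eq_zero {h f s z : L} (ht : IsSl2Triple h e f)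
    (hs : (ad ℂ L s).IsSemisimple) (heig : ∀ (x : L) (c : ℂ), ⁅h, x⁆ = c • x → ⁅s, x⁆ = c • x)
    (hez : ⁅e, z⁆ = 0) (hhz : ⁅h, z⁆ = 0)
    (hzk : ∀ k, ⁅e, k⁆ = 0 → ⁅s, k⁆ = 0 → killingForm ℂ L k z = 0) : z = 0 := by
  have hneg (n : ℕ) : (-2 : ℂ) ≠ n := fun hn => by
    have := congrArg Complex.re hn
    norm_num at this
    linarith [n.cast_nonneg (α := ℝ)]
  have hfz : ⁅f, z⁆ = 0 := by
    refine eq_zero_of_lie_mem_span_of_ne_natCast (z := 0) ht (lie_zero e) (lie_zero f) hneg ?_ ?_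
    · rw [leibniz_lie, hhz, lie_zero, add_zero, ht.lie_lie_smul_f ℂ, neg_lie, smul_lie, neg_smul]
    · rw [leibniz_lie, ht.lie_e_f, hhz, hez, lie_zero, add_zero]
      exact zero_mem _
  have hsz : ⁅s, z⁆ = (0 : ℂ) • z := heig z 0 (by rw [hhz, zero_smul])
  have hsh : ⁅h, s⁆ = 0 := by rw [lie_eq_zero_comm]; simpa using heig h 0 (by simp)
  obtain ⟨y, hsy, hey⟩ := exists_lie_eq_sub_smul hs (heig _ _ (ht.lie_h_e_smul ℂ)) hsz
    fun k hek hsk => hzk k hek (by simpa using hsk)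
  by_contra hz
  obtain ⟨w, ⟨hsw, hew⟩, hw0, d, hd⟩ := exists_mem_apply_eq_smul (f := ad ℂ L h)
    (W := adEigenspace s (-2) ⊓ (ℂ ∙ z).comap (ad ℂ L e))
    ((Submodule.ne_bot_iff _).2 ⟨y, ⟨mem_adEigenspace.2 (by simpa using hsy),
      Submodule.mem_span_singleton.2 ⟨1, by simp [hey]⟩⟩, by rintro rfl; simp [← hey] at hz⟩)
    fun w ⟨hsw, hew⟩ => ⟨lie_mem_adEigenspace (mem_adEigenspace_zero.2 (by
      rw [← lie_skew, hsh, neg_zero])) hsw (zero_add _), by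
      obtain ⟨a, ha⟩ := Submodule.mem_span_singleton.1 hew
      rw [ad_apply] at ha
      refine Submodule.mem_span_singleton.2 ⟨-2 * a, ?_⟩
      rw [ad_apply, ad_apply, leibniz_lie, ← lie_skew e, ht.lie_h_e_smul ℂ, ← ha, lie_smul, hhz,
        neg_lie, smul_lie, ← ha]
      module⟩
  obtain rfl : d = -2 := smul_left_injective ℂ hw0 ((heig w d hd).symm.trans
    (mem_adEigenspace.1 hsw))
  exact hw0 (eq_zero_of_lie_mem_span_of_ne_natCast ht hez hfz hneg hd hew)

-- Otherwise take `z ≠ 0` central in the common centralizer of `e` and `s`, which consists of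
-- nilpotent elements; then `z` is orthogonal to this centralizer.
lemma IsDistinguished.eq_zero_of_lie_eq_zero (he : IsDistinguished L e) {h f : L}
    (ht : IsSl2Triple h e f) {s n : L} (hsn : s + n = h) (hs : (ad ℂ L s).IsSemisimple)
    (heig : ∀ (x : L) (c : ℂ), ⁅h, x⁆ = c • x → ⁅s, x⁆ = c • x) {x : L} (hex : ⁅e, x⁆ = 0)
    (hsx : ⁅s, x⁆ = 0) : x = 0 := by
  have hse : ⁅s, e⁆ = (2 : ℂ) • e := heig _ _ (ht.lie_h_e_smul ℂ)
  have hns : ⁅n, s⁆ = 0 := by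
    rw [lie_eq_zero_comm]
    simpa [← hsn] using heig h 0 (by simp)
  have hne : ⁅n, e⁆ = 0 := by
    have := ht.lie_h_e_smul ℂ
    rwa [← hsn, add_lie, hse, add_eq_left] at this
  by_contra hx0
  obtain ⟨z, ⟨hze, hzs⟩, hz0, hcomm⟩ := exists_ne_zero_lie_eq_zero_of_forall_isNilpotent
    (centralizer L e ⊓ centralizer L s) (fun x hx => he.isNilpotent_ad hx.1) (x := x)
    ⟨lie_eq_zero_comm.1 hex, lie_eq_zero_comm.1 hsx⟩ hx0
  refine hz0 (eq_zero_of_lie_eq_zero_of_forall_killingForm_eq_zero ht hs heig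
    (lie_eq_zero_comm.1 hze) ?_ fun k hek hsk => ?_)
  · rw [← hsn, add_lie, lie_eq_zero_comm.1 hzs, lie_eq_zero_comm.1 (hcomm n ⟨hne, hns⟩), add_zero]
  · exact killingForm_eq_zero_of_isNilpotent_of_lie_eq_zero
      (he.isNilpotent_ad (lie_eq_zero_comm.1 hek))
      (lie_eq_zero_comm.1 (hcomm k ⟨lie_eq_zero_comm.1 hek, lie_eq_zero_comm.1 hsk⟩))

theorem IsDistinguished.isSemisimple_ad_and_eq_zero (he : IsDistinguished L e) {h f : L}
    (ht : IsSl2Triple h e f) :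
    (ad ℂ L h).IsSemisimple ∧ ∀ x : L, ⁅e, x⁆ = 0 → ⁅h, x⁆ = 0 → x = 0 := by
  obtain ⟨s, n, hsn, hs, -, heig⟩ := exists_jordan_decomposition (K := ℂ) h
  have hzero {x : L} := he.eq_zero_of_lie_eq_zero ht hsn hs heig (x := x)
  have hn : n = 0 := by
    refine hzero ?_ (by simpa [← hsn] using heig h 0 (by simp))
    have := ht.lie_h_e_smul ℂ
    rw [← hsn, add_lie, heig _ _ (ht.lie_h_e_smul ℂ), add_eq_left] at this
    rw [← lie_skew, this, neg_zero]
  obtain rfl : s = h := by rw [← hsn, hn, add_zero]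
  exact ⟨hs, fun _ => hzero⟩

end DistinguishedTriples

section WeightSpaces

open LieAlgebra Module

section Basis

variable {L : Type*} [LieRing L] [LieAlgebra ℂ L] {ι : Type*} {b : Basis ι ℂ L} {wt : ι → ℤ} {s : L}

lemma repr_lie_apply (hwt : ∀ i, ⁅s, b i⁆ = (wt i : ℂ) • b i) (x : L) (i : ι) :
    b.repr ⁅s, x⁆ i = wt i * b.repr x i := by
  have hcoord : b.coord i ∘ₗ ad ℂ L s = (wt i : ℂ) • b.coord i := b.ext fun j => by
    rcases eq_or_ne j i with rfl | hji
    · simp [hwt]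
    · simp [hwt, Finsupp.single_eq_of_ne' hji]
  exact LinearMap.congr_fun hcoord x

lemma repr_eq_zero_of_mem_adEigenspace (hwt : ∀ i, ⁅s, b i⁆ = (wt i : ℂ) • b i) {c : ℂ} {x : L}
    (hx : x ∈ adEigenspace s c) {i : ι} (hi : (wt i : ℂ) ≠ c) : b.repr x i = 0 := by
  have h := repr_lie_apply hwt x i
  rw [mem_adEigenspace.1 hx, map_smul, Finsupp.smul_apply, smul_eq_mul] at h
  exact (mul_eq_mul_right_iff.1 h.symm).resolve_left hi

lemma mem_engel_iff_of_basis (hwt : ∀ i, ⁅s, b i⁆ = (wt i : ℂ) • b i) {x : L} :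
    x ∈ LieSubalgebra.engel ℂ s ↔ ⁅s, x⁆ = 0 := by
  refine (LieSubalgebra.mem_engel_iff ℂ s x).trans
    ⟨fun ⟨j, hj⟩ => b.ext_elem fun i => ?_, fun hx => ⟨1, by simp [hx]⟩⟩
  have hpow (j : ℕ) : b.repr ((ad ℂ L s ^ j) x) i = (wt i : ℂ) ^ j * b.repr x i := by
    induction j with
    | zero => simp
    | succ j ih =>
      rw [pow_succ', Module.End.mul_apply, ad_apply, repr_lie_apply hwt, ih, pow_succ', mul_assoc]
  have h := hpow j
  rw [hj, map_zero, Finsupp.zero_apply, eq_comm, mul_eq_zero] at h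
  rw [repr_lie_apply hwt, map_zero, Finsupp.zero_apply, mul_eq_zero]
  exact h.imp_left eq_zero_of_pow_eq_zero

lemma adEigenspace_eq_span (hwt : ∀ i, ⁅s, b i⁆ = (wt i : ℂ) • b i) (c : ℤ) :
    adEigenspace s (c : ℂ) = Submodule.span ℂ (b '' {i | wt i = c}) := by
  refine le_antisymm (fun x hx => b.mem_span_image.2 fun i hi => ?_) (Submodule.span_le.2 ?_)
  · by_contra hne
    exact Finsupp.mem_support_iff.1 hi
      (repr_eq_zero_of_mem_adEigenspace hwt hx (by exact_mod_cast hne))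
  · rintro _ ⟨i, rfl, rfl⟩
    exact mem_adEigenspace.2 (hwt i)

lemma eq_sum_of_mem_adEigenspace [Fintype ι] (hwt : ∀ i, ⁅s, b i⁆ = (wt i : ℂ) • b i) {c : ℤ}
    {x : L} (hx : x ∈ adEigenspace s (c : ℂ)) : x = ∑ i with wt i = c, b.repr x i • b i := by
  conv_lhs => rw [← b.sum_repr x]
  refine (Finset.sum_filter_of_ne fun i _ hi => ?_).symm
  by_contra hne
  exact hi (by rw [repr_eq_zero_of_mem_adEigenspace hwt hx (by exact_mod_cast hne), zero_smul])

lemma finrank_span_image_setOf [Fintype ι] (p : ι → Prop) [DecidablePred p] :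
    finrank ℂ (Submodule.span ℂ (b '' {i | p i})) = Finset.card {i | p i} := by
  rw [← Fintype.card_subtype, ← finrank_span_eq_card (R := ℂ) (b := fun i : {i // p i} => b i)
    (b.linearIndependent.comp _ Subtype.val_injective), Set.image_eq_range]
  rfl

lemma finrank_adEigenspace [Fintype ι] (hwt : ∀ i, ⁅s, b i⁆ = (wt i : ℂ) • b i) (c : ℤ) :
    finrank ℂ (adEigenspace s (c : ℂ)) = Finset.card {i | wt i = c} := by
  rw [adEigenspace_eq_span hwt, finrank_span_image_setOf]

end Basis

variable {L : Type*} [LieRing L] [LieAlgebra ℂ L] {h e f : L}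

lemma exists_eq_natCast_of_lie_e_eq_zero [FiniteDimensional ℂ L] (ht : IsSl2Triple h e f) {x : L}
    {c : ℂ} (hx : x ≠ 0) (hhx : x ∈ adEigenspace h c) (hex : ⁅e, x⁆ = 0) : ∃ n : ℕ, c = n :=
  have : ht.HasPrimitiveVectorWith x c := ⟨hx, mem_adEigenspace.1 hhx, hex⟩
  this.exists_nat

lemma exists_eq_intCast_of_mem_adEigenspace [FiniteDimensional ℂ L] (ht : IsSl2Triple h e f)
    (he : IsNilpotent (ad ℂ L e)) {x : L} {c : ℂ} (hx : x ≠ 0) (hhx : x ∈ adEigenspace h c) :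
    ∃ n : ℤ, c = n := by
  obtain ⟨j, hj⟩ := he
  replace hj : ((ad ℂ L e) ^ j) x = 0 := by rw [hj]; rfl
  induction j generalizing x c with
  | zero => exact absurd hj hx
  | succ j ih =>
    by_cases hex : ⁅e, x⁆ = 0
    · exact (exists_eq_natCast_of_lie_e_eq_zero ht hx hhx hex).imp' (↑) (by simp)
    · obtain ⟨n, hn⟩ := ih hex (lie_mem_adEigenspace (mem_adEigenspace.2 (ht.lie_h_e_smul ℂ)) hhx
        rfl) (by rwa [pow_succ] at hj)
      exact ⟨n - 2, by push_cast; rw [← hn]; ring⟩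

lemma ker_ad_e_le_span [FiniteDimensional ℂ L] {ι : Type*} {b : Basis ι ℂ L} {wt : ι → ℤ}
    (ht : IsSl2Triple h e f) (hs : (ad ℂ L h).IsSemisimple)
    (hwt : ∀ i, ⁅h, b i⁆ = (wt i : ℂ) • b i) :
    LinearMap.ker (ad ℂ L e) ≤ Submodule.span ℂ (b '' {i | 0 ≤ wt i}) := by
  rw [Submodule.eq_iSup_inf_genEigenspace (p := LinearMap.ker (ad ℂ L e)) (f := ad ℂ L h) ⊤
    (fun x hx => ?_) (End.iSup_maxGenEigenspace_eq_top _)]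
  · refine iSup_le fun c x ⟨hex, hhx⟩ => ?_
    by_cases hx : x = 0
    · exact hx ▸ zero_mem _
    have hhx : x ∈ adEigenspace h c :=
      (hs.isFinitelySemisimple.maxGenEigenspace_eq_eigenspace c).le hhx
    obtain ⟨n, rfl⟩ := exists_eq_natCast_of_lie_e_eq_zero ht hx hhx hex
    rw [← Int.cast_natCast, adEigenspace_eq_span hwt] at hhx
    refine Submodule.span_mono (Set.image_mono fun i (hi : wt i = n) => ?_) hhx
    exact (hi ▸ Int.natCast_nonneg n : 0 ≤ wt i)
  · rw [LinearMap.mem_ker, ad_apply] at hx ⊢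
    rw [ad_apply, leibniz_lie, ← lie_skew e h, ht.lie_h_e_smul ℂ]
    simp [hx]

variable [FiniteDimensional ℂ L] [IsKilling ℂ L]

lemma exists_lie_e_eq_of_one_le (ht : IsSl2Triple h e f) (hs : (ad ℂ L h).IsSemisimple) {c : ℤ}
    (hc : 1 ≤ c) {t : L} (htc : t ∈ adEigenspace h (c : ℂ)) :
    ∃ u ∈ adEigenspace h ((c - 2 : ℤ) : ℂ), ⁅e, u⁆ = t := by
  obtain ⟨u, hu, rfl⟩ := exists_lie_eq_sub_smul hs (ht.lie_h_e_smul ℂ) (mem_adEigenspace.1 htc)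
    fun k hek hhk => by
      by_cases hk : k = 0
      · rw [hk, map_zero, LinearMap.zero_apply]
      · obtain ⟨n, hn⟩ := exists_eq_natCast_of_lie_e_eq_zero ht hk (mem_adEigenspace.2 hhk) hek
        have : -c = n := by exact_mod_cast hn
        omega
  exact ⟨u, mem_adEigenspace.2 (by push_cast; exact hu), rfl⟩

variable {ι : Type*} {b : Basis ι ℂ L} {wt : ι → ℤ}

lemma map_ad_e_span (ht : IsSl2Triple h e f) (hs : (ad ℂ L h).IsSemisimple)
    (hwt : ∀ i, ⁅h, b i⁆ = (wt i : ℂ) • b i) :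
    (Submodule.span ℂ (b '' {i | 0 ≤ wt i})).map (ad ℂ L e) =
      Submodule.span ℂ (b '' {i | 2 ≤ wt i}) := by
  apply le_antisymm
  · rw [Submodule.map_span, Submodule.span_le]
    rintro _ ⟨_, ⟨i, hi : 0 ≤ wt i, rfl⟩, rfl⟩
    have h := lie_mem_adEigenspace (mem_adEigenspace.2 (ht.lie_h_e_smul ℂ))
      (mem_adEigenspace.2 (hwt i)) (c := ((wt i + 2 : ℤ) : ℂ)) (by push_cast; ring)
    rw [adEigenspace_eq_span hwt] at h
    exact Submodule.span_mono (Set.image_mono fun j (hj : wt j = wt i + 2) => (by omega : 2 ≤ wt j))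
      h
  · rw [Submodule.span_le]
    rintro _ ⟨i, hi : 2 ≤ wt i, rfl⟩
    obtain ⟨u, hu, hui⟩ := exists_lie_e_eq_of_one_le ht hs (by omega) (mem_adEigenspace.2 (hwt i))
    rw [adEigenspace_eq_span hwt] at hu
    exact ⟨u, Submodule.span_mono
      (Set.image_mono fun j (hj : wt j = wt i - 2) => (by omega : 0 ≤ wt j)) hu, hui⟩

lemma finrank_centralizer_add_card [Fintype ι] (ht : IsSl2Triple h e f)
    (hs : (ad ℂ L h).IsSemisimple) (hwt : ∀ i, ⁅h, b i⁆ = (wt i : ℂ) • b i) :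
    finrank ℂ (centralizer L e) + Finset.card {i | 2 ≤ wt i} = Finset.card {i | 0 ≤ wt i} := by
  have hcent : (centralizer L e).toSubmodule = LinearMap.ker (ad ℂ L e) := by
    ext x
    rw [LinearMap.mem_ker, ad_apply, ← lie_skew, neg_eq_zero]
    rfl
  have hrank := LinearMap.finrank_range_add_finrank_ker
    ((ad ℂ L e).domRestrict (Submodule.span ℂ (b '' {i | 0 ≤ wt i})))
  rw [LinearMap.range_domRestrict, map_ad_e_span ht hs hwt, LinearMap.ker_domRestrict,
    (Submodule.comapSubtypeEquivOfLe (ker_ad_e_le_span ht hs hwt)).finrank_eq,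
    finrank_span_image_setOf, finrank_span_image_setOf, ← hcent, add_comm] at hrank
  exact hrank

lemma IsDistinguished.card_weight_zero_eq [Fintype ι] (he : IsDistinguished L e)
    (ht : IsSl2Triple h e f) (hwt : ∀ i, ⁅h, b i⁆ = (wt i : ℂ) • b i) :
    Finset.card {i | wt i = 0} = Finset.card {i | wt i = 2} := by
  obtain ⟨hs, hinj⟩ := he.isSemisimple_ad_and_eq_zero ht
  rw [← finrank_adEigenspace hwt, ← finrank_adEigenspace hwt]
  have hmap : (adEigenspace h ((0 : ℤ) : ℂ)).map (ad ℂ L e) = adEigenspace h ((2 : ℤ) : ℂ) := by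
    apply le_antisymm
    · rintro _ ⟨u, hu, rfl⟩
      exact lie_mem_adEigenspace (mem_adEigenspace.2 (ht.lie_h_e_smul ℂ)) hu (by simp)
    · intro t htc
      obtain ⟨u, hu, rfl⟩ := exists_lie_e_eq_of_one_le ht hs (by norm_num) htc
      exact ⟨u, by simpa using hu, rfl⟩
  rw [← hmap, ← LinearMap.range_domRestrict]
  refine (LinearMap.finrank_range_of_inj ((injective_iff_map_eq_zero _).2 ?_)).symm
  exact fun x hx => Subtype.ext (hinj x hx (mem_adEigenspace_zero.1 (by simpa using x.2)))

end WeightSpaces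

section IntegralCombinations

/-- A formal integral combination of elements of `ι`, in which an element may occur repeatedly. -/
abbrev IntComb (ι : Type*) := List (ι × ℤ)

namespace IntComb

section Eval
variable {ι κ M N : Type*} [AddCommGroup M] [AddCommGroup N]

/-- The combination of the vectors `m i` with the coefficients prescribed by `w`. -/
def eval (m : ι → M) (w : IntComb ι) : M := (w.map fun p => p.2 • m p.1).sum

/-- The multiple `c • w` of a formal combination. -/
def smul (c : ℤ) (w : IntComb ι) : IntComb ι := w.map fun p => (p.1, c * p.2)

/-- The formal combination obtained by substituting `f i` for `i`. -/
def subst (f : ι → IntComb κ) (w : IntComb ι) : IntComb κ := w.flatMap fun p => smul p.2 (f p.1)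

@[simp] lemma eval_nil (m : ι → M) : eval m [] = 0 := rfl

@[simp] lemma eval_cons (m : ι → M) (p : ι × ℤ) (w : IntComb ι) :
    eval m (p :: w) = p.2 • m p.1 + eval m w :=
  List.sum_cons

@[simp] lemma eval_append (m : ι → M) (v w : IntComb ι) :
    eval m (v ++ w) = eval m v + eval m w := by
  simp [eval]

lemma eval_flatMap {α : Type*} (m : ι → M) (f : α → IntComb ι) (l : List α) :
    eval m (l.flatMap f) = (l.map fun a => eval m (f a)).sum := by
  induction l with
  | nil => rfl
  | cons a l ih => rw [List.flatMap_cons, eval_append, ih, List.map_cons, List.sum_cons]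

lemma eval_eq_zero (m : ι → M) {w : IntComb ι} (h : ∀ p ∈ w, p.2 = 0) : eval m w = 0 :=
  List.sum_eq_zero <| List.forall_mem_map.2 fun p hp => by rw [h p hp, zero_smul]

@[simp] lemma eval_smul (m : ι → M) (c : ℤ) (w : IntComb ι) : eval m (smul c w) = c • eval m w := by
  simp [eval, smul, List.smul_sum, Function.comp_def, mul_smul]

lemma eval_subst (m : κ → M) (f : ι → IntComb κ) (w : IntComb ι) :
    eval m (subst f w) = eval (fun i => eval m (f i)) w := by
  rw [subst, eval_flatMap, eval]
  simp only [eval_smul]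

lemma map_eval (g : M →+ N) (m : ι → M) (w : IntComb ι) : g (eval m w) = eval (g ∘ m) w := by
  simp [eval, map_list_sum, Function.comp_def]

lemma eval_mem {S : AddSubgroup M} {m : ι → M} {w : IntComb ι} (h : ∀ p ∈ w, m p.1 ∈ S) :
    eval m w ∈ S :=
  S.list_sum_mem <| List.forall_mem_map.2 fun p hp => S.zsmul_mem (h p hp) p.2

end Eval

section Collect
variable {ι M : Type*} [DecidableEq ι]

/-- The total coefficient of `i` in a formal combination. -/
def coeff (w : IntComb ι) (i : ι) : ℤ := w.foldr (fun p s => if p.1 = i then p.2 + s else s) 0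

/-- The formal combination obtained by adding a term, which is merged with the first term for the
same element if there is one. -/
def insert (p : ι × ℤ) : IntComb ι → IntComb ι
  | [] => [p]
  | q :: w => if p.1 = q.1 then (q.1, p.2 + q.2) :: w else q :: insert p w

/-- The formal combination in which all terms for the same element have been merged. -/
def collect (w : IntComb ι) : IntComb ι := w.foldr insert []

/-- Equality of all coefficients of two formal combinations. -/
def Equiv (v w : IntComb ι) : Prop := ∀ p ∈ collect (v ++ smul (-1) w), p.2 = 0

instance (v w : IntComb ι) : Decidable (Equiv v w) :=
  inferInstanceAs (Decidable (∀ p ∈ collect (v ++ smul (-1) w), p.2 = 0))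

@[simp] lemma coeff_nil (i : ι) : coeff [] i = 0 := rfl

@[simp] lemma coeff_cons (p : ι × ℤ) (w : IntComb ι) (i : ι) :
    coeff (p :: w) i = (if p.1 = i then p.2 else 0) + coeff w i := by
  rw [coeff, List.foldr_cons, ← coeff]
  split_ifs <;> simp

variable [AddCommGroup M]

lemma eval_insert (m : ι → M) (p : ι × ℤ) (w : IntComb ι) :
    eval m (insert p w) = p.2 • m p.1 + eval m w := by
  induction w with
  | nil => rfl
  | cons q w ih =>
    rw [insert]
    split_ifs with h
    · rw [eval_cons, eval_cons, h, add_smul, add_assoc]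
    · rw [eval_cons, eval_cons, ih, add_left_comm]

@[simp] lemma eval_collect (m : ι → M) (w : IntComb ι) : eval m (collect w) = eval m w := by
  induction w with
  | nil => rfl
  | cons p w ih => rw [collect, List.foldr_cons, eval_insert, ← collect, ih, eval_cons]

lemma eval_eq_of_equiv (m : ι → M) {v w : IntComb ι} (h : Equiv v w) : eval m v = eval m w := by
  rw [← sub_eq_zero, ← eval_eq_zero m h, eval_collect, eval_append, eval_smul, neg_smul, one_smul,
    sub_eq_add_neg]

end Collect
end IntComb
end IntegralCombinations

section SparseMatrices
open IntComb Matrix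

/-- An integral matrix given by its nonzero entries, each a position together with a value. -/
abbrev SparseMatrix (n : Type*) := IntComb (n × n)

namespace SparseMatrix
variable {n : Type*} [DecidableEq n]

/-- The complex matrix with the given entries. -/
noncomputable def toMatrix (A : SparseMatrix n) : Matrix n n ℂ :=
  eval (fun p => Matrix.single p.1 p.2 1) A

/-- The sparse form of the matrix product. -/
def mul (A B : SparseMatrix n) : SparseMatrix n :=
  A.flatMap fun p => (B.filter fun q => p.1.2 = q.1.1).map fun q => ((p.1.1, q.1.2), p.2 * q.2)

/-- The sparse form of the commutator. -/
def commutator (A B : SparseMatrix n) : SparseMatrix n :=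
  collect (mul A B ++ smul (-1) (mul B A))

/-- The sparse form of the transpose. -/
def transpose (A : SparseMatrix n) : SparseMatrix n := A.map fun p => (p.1.swap, p.2)

@[simp] lemma toMatrix_nil : toMatrix ([] : SparseMatrix n) = 0 := rfl

@[simp] lemma toMatrix_cons (p : (n × n) × ℤ) (A : SparseMatrix n) :
    toMatrix (p :: A) = p.2 • Matrix.single p.1.1 p.1.2 1 + toMatrix A :=
  eval_cons _ p A

lemma toMatrix_apply (A : SparseMatrix n) (i j : n) : toMatrix A i j = coeff A (i, j) := by
  induction A with
  | nil => simp
  | cons p A ih => simp [ih, Matrix.single_apply, Prod.ext_iff]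

lemma toMatrix_transpose (A : SparseMatrix n) : toMatrix (transpose A) = (toMatrix A)ᵀ := by
  induction A with
  | nil => simp [transpose]
  | cons p A ih =>
    rw [transpose, List.map_cons, ← transpose, toMatrix_cons, ih, toMatrix_cons,
      Matrix.transpose_add, Matrix.transpose_smul, Matrix.transpose_single]
    rfl

variable [Fintype n]

lemma toMatrix_mul (A B : SparseMatrix n) : toMatrix (mul A B) = toMatrix A * toMatrix B := by
  have hrow (p : (n × n) × ℤ) :
      toMatrix ((B.filter fun q => p.1.2 = q.1.1).map fun q => ((p.1.1, q.1.2), p.2 * q.2)) =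
        (p.2 • Matrix.single p.1.1 p.1.2 1) * toMatrix B := by
    induction B with
    | nil => simp
    | cons q B ih =>
      rw [toMatrix_cons, mul_add, ← ih, List.filter_cons]
      by_cases h : p.1.2 = q.1.1 <;> simp [h, mul_smul]
  induction A with
  | nil => simp [mul]
  | cons p A ih =>
    rw [toMatrix_cons, add_mul, ← hrow, ← ih]
    exact eval_append _ _ _

attribute [local instance 100] LieRing.ofAssociativeRing

lemma toMatrix_commutator (A B : SparseMatrix n) :
    toMatrix (commutator A B) = ⁅toMatrix A, toMatrix B⁆ := by
  rw [commutator, toMatrix, eval_collect, eval_append, eval_smul, ← toMatrix, ← toMatrix,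
    toMatrix_mul, toMatrix_mul, Ring.lie_def, neg_smul, one_smul, sub_eq_add_neg]

/-- The sparse form of a diagonal matrix. -/
def diagonal {r : ℕ} (d : Fin r → ℤ) : SparseMatrix (Fin r) :=
  (List.finRange r).map fun i => ((i, i), d i)

lemma toMatrix_diagonal {r : ℕ} (d : Fin r → ℤ) :
    toMatrix (diagonal d) = Matrix.diagonal fun i => (d i : ℂ) := by
  rw [toMatrix, eval, diagonal, List.map_map, ← Fin.sum_univ_def]
  ext i j
  simp [Matrix.sum_apply, Matrix.single_apply, Matrix.diagonal_apply, ite_and]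

lemma lie_toMatrix_diagonal {r : ℕ} {d : Fin r → ℤ} {A : SparseMatrix (Fin r)} {c : ℤ}
    (h : ∀ p ∈ A, d p.1.1 - d p.1.2 = c) :
    ⁅toMatrix (diagonal d), toMatrix A⁆ = (c : ℂ) • toMatrix A := by
  rw [toMatrix_diagonal, Ring.lie_def]
  induction A with
  | nil => simp
  | cons p A ih =>
    have hp : Matrix.diagonal (fun i => (d i : ℂ)) * Matrix.single p.1.1 p.1.2 1 -
        Matrix.single p.1.1 p.1.2 1 * Matrix.diagonal (fun i => (d i : ℂ)) =
          (c : ℂ) • Matrix.single p.1.1 p.1.2 1 := by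
      ext i j
      by_cases hij : p.1.1 = i ∧ p.1.2 = j
      · simp [← h p List.mem_cons_self, hij]
      · simp [hij]
    rw [toMatrix_cons, mul_add, add_mul, add_sub_add_comm, mul_smul_comm, smul_mul_assoc,
      ← smul_sub, hp, ih fun q hq => h q (List.mem_cons_of_mem p hq), smul_add, smul_comm]

end SparseMatrix
end SparseMatrices

section MatrixModel

namespace F4Model
open IntComb SparseMatrix Matrix

/-- The positions of the entries of the simple root vectors of `F₄`, all of them equal to `1`, in
the `27`-dimensional minuscule representation of `E₆` restricted to `F₄`. The first two simple
roots are short: each is an orbit of two simple roots of `E₆` under the diagram automorphism, and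
its root vector has twice as many entries as those of the long roots. -/
def simpleSupport : Fin 4 → List (Fin 27 × Fin 27) :=
  ![[(0, 1), (5, 7), (6, 9), (8, 11), (10, 12), (10, 13), (12, 15), (13, 15), (16, 17), (18, 19),
     (20, 21), (25, 26)],
    [(1, 2), (3, 5), (4, 6), (8, 10), (11, 13), (11, 14), (13, 16), (14, 16), (15, 17), (19, 22),
     (21, 23), (24, 25)],
    [(2, 3), (6, 8), (9, 11), (16, 18), (17, 19), (23, 24)],
    [(3, 4), (5, 6), (7, 9), (18, 20), (19, 21), (22, 23)]]

/-- The root vector of a simple root. -/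
def simpleMatrix (i : Fin 4) : SparseMatrix (Fin 27) := (simpleSupport i).map fun p => (p, 1)

/-- The weights of the representation in the coordinates given by the simple roots. They are the
short roots, and zero with multiplicity three. -/
def repWeight : Fin 27 → Fin 4 → ℤ :=
  ![![2, 3, 2, 1], ![1, 3, 2, 1], ![1, 2, 2, 1], ![1, 2, 1, 1], ![1, 2, 1, 0], ![1, 1, 1, 1],
    ![1, 1, 1, 0], ![0, 1, 1, 1], ![1, 1, 0, 0], ![0, 1, 1, 0], ![1, 0, 0, 0], ![0, 1, 0, 0],
    ![0, 0, 0, 0], ![0, 0, 0, 0], ![0, 0, 0, 0], ![-1, 0, 0, 0], ![0, -1, 0, 0], ![-1, -1, 0, 0],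
    ![0, -1, -1, 0], ![-1, -1, -1, 0], ![0, -1, -1, -1], ![-1, -1, -1, -1], ![-1, -2, -1, 0],
    ![-1, -2, -1, -1], ![-1, -2, -2, -1], ![-1, -3, -2, -1], ![-2, -3, -2, -1]]

/-- How the positive roots of height at least two arise from roots of smaller height. In the list
of the roots in decreasing order, a step `(i, t, c)` puts in front the sum of the root at position
`t` and the simple root `i`. Its root vector is the commutator of the root vectors of these roots
divided by the structure constant `c`. -/
def rootSteps : List (Fin 4 × ℕ × ℤ) :=
  [(0, 2, 1), (1, 2, 1), (2, 2, 1), (0, 1, 1), (1, 2, 2), (1, 2, 1), (0, 1, 1), (0, 1, 1),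
   (3, 3, 1), (0, 2, 2), (0, 1, 1), (2, 2, 1), (3, 2, 1), (0, 1, 1), (2, 1, 1), (1, 1, 1),
   (0, 0, 1), (1, 0, 2), (2, 0, 1), (3, 0, 1)]

/-- The root vectors of the positive roots, in decreasing order. -/
def rootMatrices : List (SparseMatrix (Fin 27)) :=
  rootSteps.foldl
    (fun l s => ((commutator (simpleMatrix s.1) (l.getD s.2.1 [])).filterMap
      fun p => if p.2 = 0 then none else some (p.1, p.2 / s.2.2)) :: l)
    ((List.finRange 4).map fun i => simpleMatrix i.rev)

/-- The root vector of a positive root. -/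
def rootMatrix (k : Fin 24) : SparseMatrix (Fin 27) := rootMatrices.getD k.rev []

/-- The coordinates of the positive roots with respect to the simple roots. -/
def positiveRoot : Fin 24 → Fin 4 → ℤ :=
  ![![1, 0, 0, 0], ![0, 1, 0, 0], ![0, 0, 1, 0], ![0, 0, 0, 1], ![1, 1, 0, 0], ![0, 1, 1, 0],
    ![0, 0, 1, 1], ![1, 1, 1, 0], ![0, 2, 1, 0], ![0, 1, 1, 1], ![1, 2, 1, 0], ![1, 1, 1, 1],
    ![0, 2, 1, 1], ![2, 2, 1, 0], ![1, 2, 1, 1], ![0, 2, 2, 1], ![2, 2, 1, 1], ![1, 2, 2, 1],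
    ![2, 2, 2, 1], ![1, 3, 2, 1], ![2, 3, 2, 1], ![2, 4, 2, 1], ![2, 4, 3, 1], ![2, 4, 3, 2]]

/-- The labels of a basis of the Lie algebra of type `F₄`: a root vector for each positive and each
negative root, and the fundamental coweights, which are dual to the simple roots. -/
inductive Index
  | pos (k : Fin 24)
  | neg (k : Fin 24)
  | coweight (i : Fin 4)
deriving DecidableEq, Fintype

/-- The labels in a list, which is faster to compute with than `Finset.univ`. -/
def indices : List Index :=
  (List.finRange 24).map .pos ++ (List.finRange 24).map .neg ++ (List.finRange 4).map .coweight

/-- The position of a simple root in the list of positive roots. -/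
def simple (i : Fin 4) : Fin 24 := i.castLE (by decide)

/-- The root of a root vector, and zero for the coweights. -/
def weight : Index → Fin 4 → ℤ
  | .pos k => positiveRoot k
  | .neg k => -positiveRoot k
  | .coweight _ => 0

/-- The matrices of the basis elements. A negative root vector is the transpose of the positive
one. -/
def basisMatrix : Index → SparseMatrix (Fin 27)
  | .pos k => rootMatrix k
  | .neg k => transpose (rootMatrix k)
  | .coweight i => diagonal fun p => repWeight p i

/-- The first entry of a positive root vector. -/
def pivot (k : Fin 24) : (Fin 27 × Fin 27) × ℤ := (rootMatrix k).headD ((0, 0), 0)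

/-- The coordinates of a matrix in the span of the basis matrices. For a root vector this is an
entry in which no other basis matrix is supported, and for a coweight the difference of two diagonal
entries whose positions have weights differing by a simple root. -/
def coord (A : SparseMatrix (Fin 27)) : Index → ℤ
  | .pos k => (pivot k).2 * coeff A (pivot k).1
  | .neg k => (pivot k).2 * coeff A (pivot k).1.swap
  | .coweight i => coeff A ((pivot (simple i)).1.1, (pivot (simple i)).1.1) -
      coeff A ((pivot (simple i)).1.2, (pivot (simple i)).1.2)

/-- The commutator of the root vector of a simple root with a basis matrix. -/
def simpleBracket (i : Fin 4) (k : Index) : IntComb Index :=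
  (indices.filter fun l => ∀ j, weight l j = weight (.pos (simple i)) j + weight k j).map fun l =>
    (l, coord (commutator (simpleMatrix i) (basisMatrix k)) l)

lemma rootMatrix_simple : ∀ i, rootMatrix (simple i) = simpleMatrix i := by
  decide +kernel

lemma coord_basisMatrix : ∀ k l, coord (basisMatrix l) k = if k = l then 1 else 0 := by
  decide +kernel

lemma repWeight_sub_repWeight : ∀ i k, ∀ p ∈ basisMatrix k,
    repWeight p.1.1 i - repWeight p.1.2 i = weight k i := by
  decide +kernel

lemma commutator_simpleMatrix : ∀ i k, Equiv (commutator (simpleMatrix i) (basisMatrix k))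
    (subst basisMatrix (simpleBracket i k)) := by
  decide +kernel

lemma weight_simple : ∀ i j, weight (.pos (simple i)) j = if i = j then 1 else 0 := by
  decide +kernel

lemma simpleBracket_neg_simple : ∀ i j, simpleBracket i (.neg (simple j)) =
    if i = j then (List.finRange 4).map fun l => (.coweight l, CartanMatrix.F₄ i l) else [] := by
  decide +kernel

lemma iterate_simpleBracket_simple : ∀ i j,
    (subst (simpleBracket i))^[(-CartanMatrix.F₄ i j).toNat] (simpleBracket i (.pos (simple j))) =
      [] := by
  decide +kernel

lemma exists_simpleBracket_eq_singleton : ∀ k : Fin 24, 4 ≤ k.val →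
    ∃ i, ∃ j < k, ∃ c ∈ [1, 2], simpleBracket i (.pos j) = [(.pos k, c)] := by
  decide +kernel

end F4Model
end MatrixModel

section SerreLift
open LieAlgebra CartanMatrix

variable {R B V : Type*} [CommRing R] [DecidableEq B] [LieRing V] [LieAlgebra R V]
  {A : Matrix B B ℤ}

/-- The homomorphism from the Lie algebra of a Cartan matrix which sends the generators to given
elements satisfying the Serre relations. -/
noncomputable def serreLift (c : Generators B → V)
    (hc : ∀ x ∈ Relations.toSet R A, FreeLieAlgebra.lift R c x = 0) :
    A.ToLieAlgebra R →ₗ⁅R⁆ V where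
  toLinearMap := (Relations.toIdeal R A).toSubmodule.liftQ (FreeLieAlgebra.lift R c).toLinearMap <|
    have h : Relations.toIdeal R A ≤ (FreeLieAlgebra.lift R c).ker :=
      LieSubmodule.lieSpan_le.2 fun x hx => LieHom.mem_ker.2 (hc x hx)
    fun _ hx => LieHom.mem_ker.1 (h hx)
  map_lie' := fun {x y} => by
    obtain ⟨x, rfl⟩ := LieSubmodule.Quotient.surjective_mk' _ x
    obtain ⟨y, rfl⟩ := LieSubmodule.Quotient.surjective_mk' _ y
    exact (FreeLieAlgebra.lift R c).map_lie x y

variable {c : Generators B → V} (hc : ∀ x ∈ Relations.toSet R A, FreeLieAlgebra.lift R c x = 0)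

lemma mem_range_serreLift (g : Generators B) : c g ∈ (serreLift c hc).range :=
  ⟨LieSubmodule.Quotient.mk (FreeLieAlgebra.of R g), FreeLieAlgebra.lift_of_apply c g⟩

lemma range_serreLift_le {S : LieSubalgebra R V} (hS : ∀ g, c g ∈ S) :
    (serreLift c hc).range ≤ S := by
  rintro _ ⟨x, rfl⟩
  obtain ⟨x, rfl⟩ := LieSubmodule.Quotient.surjective_mk' _ x
  have h : FreeLieAlgebra.lift R c = S.incl.comp (FreeLieAlgebra.lift R fun g => ⟨c g, hS g⟩) :=
    FreeLieAlgebra.hom_ext fun g => by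
      rw [FreeLieAlgebra.lift_of_apply, LieHom.comp_apply, FreeLieAlgebra.lift_of_apply]
      rfl
  change FreeLieAlgebra.lift R c x ∈ S
  rw [h]
  exact SetLike.coe_mem _

lemma map_ad_pow {M : Type*} [LieRing M] [LieAlgebra R M] (φ : M →ₗ⁅R⁆ V) (x y : M) (n : ℕ) :
    φ ((ad R M x ^ n) y) = (ad R V (φ x) ^ n) (φ y) := by
  induction n with
  | zero => rfl
  | succ n ih =>
    rw [pow_succ', pow_succ', Module.End.mul_apply, Module.End.mul_apply, ad_apply, ad_apply,
      LieHom.map_lie, ih]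

/-- The images of the generators prescribed by three families of elements. -/
def chevalley (H E F : B → V) : Generators B → V
  | .H i => H i
  | .E i => E i
  | .F i => F i

lemma lift_chevalley_eq_zero {H E F : B → V} (hHH : ∀ i j, ⁅H i, H j⁆ = 0)
    (hEF : ∀ i j, ⁅E i, F j⁆ = if i = j then H i else 0)
    (hHE : ∀ i j, ⁅H i, E j⁆ = A i j • E j) (hHF : ∀ i j, ⁅H i, F j⁆ = -(A i j • F j))
    (hEE : ∀ i j, (ad R V (E i) ^ (-A i j).toNat) ⁅E i, E j⁆ = 0)
    (hFF : ∀ i j, (ad R V (F i) ^ (-A i j).toNat) ⁅F i, F j⁆ = 0) :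
    ∀ x ∈ Relations.toSet R A, FreeLieAlgebra.lift R (chevalley H E F) x = 0 := by
  rintro x (((((⟨⟨i, j⟩, rfl⟩ | ⟨⟨i, j⟩, rfl⟩) | ⟨⟨i, j⟩, rfl⟩) | ⟨⟨i, j⟩, rfl⟩) |
    ⟨⟨i, j⟩, rfl⟩) | ⟨⟨i, j⟩, rfl⟩)
  · simpa [chevalley, Relations.HH] using hHH i j
  · by_cases hij : i = j
    · simpa [chevalley, Relations.EF, hij, sub_eq_zero] using hEF i j
    · simpa [chevalley, Relations.EF, hij] using hEF i j
  · simp [chevalley, Relations.HE, hHE]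
  · simp [chevalley, Relations.HF, hHF]
  · simpa [chevalley, Relations.adE, map_ad_pow] using hEE i j
  · simpa [chevalley, Relations.adF, map_ad_pow] using hFF i j

end SerreLift

section Models
open IntComb SparseMatrix Matrix LieAlgebra Module

attribute [local instance 100] LieRing.ofAssociativeRing

/-- The elements of a subspace whose brackets with the subspace stay in it. -/
def normalizing {R V : Type*} [CommRing R] [LieRing V] [LieAlgebra R V] (S : Submodule R V) :
    LieSubalgebra R V where
  carrier := {x | x ∈ S ∧ ∀ y ∈ S, ⁅x, y⁆ ∈ S}
  add_mem' ha hb := ⟨S.add_mem ha.1 hb.1, fun y hy => by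
    rw [add_lie]
    exact S.add_mem (ha.2 y hy) (hb.2 y hy)⟩
  zero_mem' := ⟨S.zero_mem, fun y _ => by
    rw [zero_lie]
    exact S.zero_mem⟩
  smul_mem' c x hx := ⟨S.smul_mem c hx.1, fun y hy => by
    rw [smul_lie]
    exact S.smul_mem c (hx.2 y hy)⟩
  lie_mem' ha hb := ⟨ha.2 _ hb.1, fun y hy => by
    rw [lie_lie]
    exact S.sub_mem (ha.2 _ (hb.2 y hy)) (hb.2 _ (ha.2 y hy))⟩

/-- The automorphism `A ↦ -Aᵀ` of the Lie algebra of matrices. For the basis matrices of `F₄` it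
exchanges the positive and the negative root vectors up to sign. -/
def negTranspose (R n : Type*) [CommRing R] [Fintype n] [DecidableEq n] :
    Matrix n n R →ₗ⁅R⁆ Matrix n n R where
  toFun A := -Aᵀ
  map_add' A B := by rw [Matrix.transpose_add, neg_add]
  map_smul' c A := by rw [Matrix.transpose_smul, smul_neg, RingHom.id_apply]
  map_lie' {A B} := by
    simp only [Ring.lie_def, Matrix.transpose_sub, Matrix.transpose_mul]
    noncomm_ring

namespace F4Model

/-- A family of elements of a Lie algebra which have the same brackets as the basis matrices,
because an injective homomorphism takes them there. -/
def IsModel {V : Type*} [LieRing V] [LieAlgebra ℂ V] (m : Index → V) : Prop :=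
  ∃ ρ : V →ₗ⁅ℂ⁆ Matrix (Fin 27) (Fin 27) ℂ, Function.Injective ρ ∧
    ∀ k, ρ (m k) = toMatrix (basisMatrix k)

variable {V : Type*} [LieRing V] [LieAlgebra ℂ V] {m : Index → V}

/-- The element of the Cartan subalgebra on which the simple roots have the values `n`. -/
def toral (m : Index → V) (n : Fin 4 → ℂ) : V := ∑ i, n i • m (.coweight i)

/-- The coroot of a simple root. -/
def coroot (m : Index → V) (i : Fin 4) : V := toral m fun j => (CartanMatrix.F₄ i j : ℂ)

/-- The commutator of the combinations `u` and `v` of the basis matrices is the combination `w`. -/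
abbrev HasBracket (u v w : IntComb Index) : Prop :=
  Equiv (commutator (subst basisMatrix u) (subst basisMatrix v)) (subst basisMatrix w)

lemma map_eval_eq_toMatrix {ρ : V →ₗ⁅ℂ⁆ Matrix (Fin 27) (Fin 27) ℂ}
    (hρ : ∀ k, ρ (m k) = toMatrix (basisMatrix k)) (w : IntComb Index) :
    ρ (eval m w) = toMatrix (subst basisMatrix w) := by
  rw [toMatrix, eval_subst]
  exact (map_eval (ρ : V →+ Matrix (Fin 27) (Fin 27) ℂ) m w).trans (congrArg (eval · w) (funext hρ))

namespace IsModel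

lemma lie_eval (hm : IsModel m) {u v w : IntComb Index} (h : HasBracket u v w) :
    ⁅eval m u, eval m v⁆ = eval m w := by
  obtain ⟨ρ, hinj, hρ⟩ := hm
  apply hinj
  rw [LieHom.map_lie, map_eval_eq_toMatrix hρ, map_eval_eq_toMatrix hρ, map_eval_eq_toMatrix hρ,
    ← toMatrix_commutator]
  exact eval_eq_of_equiv _ h

lemma lie_simple (hm : IsModel m) (i : Fin 4) (k : Index) :
    ⁅m (.pos (simple i)), m k⁆ = eval m (simpleBracket i k) := by
  obtain ⟨ρ, hinj, hρ⟩ := hm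
  apply hinj
  rw [LieHom.map_lie, hρ, hρ, map_eval_eq_toMatrix hρ, basisMatrix, rootMatrix_simple,
    ← toMatrix_commutator]
  exact eval_eq_of_equiv _ (commutator_simpleMatrix i k)

lemma lie_coweight (hm : IsModel m) (i : Fin 4) (k : Index) :
    ⁅m (.coweight i), m k⁆ = (weight k i : ℂ) • m k := by
  obtain ⟨ρ, hinj, hρ⟩ := hm
  apply hinj
  rw [LieHom.map_lie, map_smul, hρ, hρ]
  exact lie_toMatrix_diagonal (repWeight_sub_repWeight i k)

lemma lie_toral (hm : IsModel m) (n : Fin 4 → ℂ) (k : Index) :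
    ⁅toral m n, m k⁆ = (∑ i, n i * weight k i) • m k := by
  simp only [toral, sum_lie, smul_lie, hm.lie_coweight, smul_smul, Finset.sum_smul]

lemma lie_toral_simple (hm : IsModel m) (n : Fin 4 → ℂ) (i : Fin 4) :
    ⁅toral m n, m (.pos (simple i))⁆ = n i • m (.pos (simple i)) := by
  simp [hm.lie_toral, weight_simple]

lemma lie_toral_neg_simple (hm : IsModel m) (n : Fin 4 → ℂ) (i : Fin 4) :
    ⁅toral m n, m (.neg (simple i))⁆ = (-n i) • m (.neg (simple i)) := by
  have h (j) : weight (.neg (simple i)) j = -if i = j then 1 else 0 := by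
    rw [← weight_simple]
    rfl
  simp [hm.lie_toral, h]

lemma lie_toral_toral (hm : IsModel m) (n n' : Fin 4 → ℂ) : ⁅toral m n, toral m n'⁆ = 0 := by
  rw [toral.eq_def m n', lie_sum]
  exact Finset.sum_eq_zero fun i _ => by simp [hm.lie_toral, weight]

lemma lie_simple_neg_simple (hm : IsModel m) (i j : Fin 4) :
    ⁅m (.pos (simple i)), m (.neg (simple j))⁆ = if i = j then coroot m i else 0 := by
  rw [hm.lie_simple, simpleBracket_neg_simple]
  split_ifs with h
  · simp [coroot, toral, eval, Fin.sum_univ_def, Function.comp_def, Int.cast_smul_eq_zsmul]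
  · rfl

lemma ad_simple_pow_eval (hm : IsModel m) (i : Fin 4) (w : IntComb Index) (n : ℕ) :
    (ad ℂ V (m (.pos (simple i))) ^ n) (eval m w) = eval m ((subst (simpleBracket i))^[n] w) := by
  induction n with
  | zero => rfl
  | succ n ih =>
    rw [pow_succ', Module.End.mul_apply, ih, Function.iterate_succ_apply', eval_subst, ad_apply]
    exact (map_eval (ad ℂ V (m (.pos (simple i))) : V →+ V) m _).trans
      (congrArg (eval · _) (funext (hm.lie_simple i)))

lemma ad_simple_pow_lie (hm : IsModel m) (i j : Fin 4) :
    (ad ℂ V (m (.pos (simple i))) ^ (-CartanMatrix.F₄ i j).toNat)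
      ⁅m (.pos (simple i)), m (.pos (simple j))⁆ = 0 := by
  rw [hm.lie_simple, hm.ad_simple_pow_eval, iterate_simpleBracket_simple, eval_nil]

lemma pos_mem (hm : IsModel m) {S : LieSubalgebra ℂ V} (hS : ∀ i, m (.pos (simple i)) ∈ S)
    (k : Fin 24) : m (.pos k) ∈ S := by
  induction k using WellFoundedLT.induction with
  | ind k ih =>
    by_cases hk : 4 ≤ k.val
    · obtain ⟨i, j, hjk, c, hc, hij⟩ := exists_simpleBracket_eq_singleton k hk
      have hlie := S.lie_mem (hS i) (ih j hjk)
      have hc0 : (c : ℂ) ≠ 0 := by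
        rw [Int.cast_ne_zero]
        rintro rfl
        exact absurd hc (by decide)
      rw [hm.lie_simple, hij, eval_cons, eval_nil, add_zero, ← Int.cast_smul_eq_zsmul ℂ] at hlie
      exact (S.toSubmodule.smul_mem_iff hc0).1 hlie
    · exact hS ⟨k, by omega⟩

lemma coweight_mem (hm : IsModel m) {S : LieSubalgebra ℂ V}
    (hpos : ∀ i, m (.pos (simple i)) ∈ S) (hneg : ∀ i, m (.neg (simple i)) ∈ S) (i : Fin 4) :
    m (.coweight i) ∈ S := by
  have hcoroot (k : Fin 4) : coroot m k ∈ S := by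
    have h := S.lie_mem (hpos k) (hneg k)
    rwa [hm.lie_simple_neg_simple, if_pos rfl] at h
  have hinv (j : Fin 4) : ∑ k, (CartanMatrix.F₄⁻¹ i k : ℂ) * (CartanMatrix.F₄ k j : ℂ) =
      if i = j then 1 else 0 := by
    have h := congrFun₂ (Matrix.nonsing_inv_mul CartanMatrix.F₄ (by decide)) i j
    rw [Matrix.mul_apply, Matrix.one_apply] at h
    exact_mod_cast h
  have hsum : m (.coweight i) = ∑ k, (CartanMatrix.F₄⁻¹ i k : ℂ) • coroot m k := by
    simp only [coroot, toral, Finset.smul_sum, smul_smul]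
    rw [Finset.sum_comm]
    simp_rw [← Finset.sum_smul]
    simp [hinv]
  rw [hsum]
  exact sum_mem fun k _ => S.smul_mem _ (hcoroot k)

end IsModel

/-- The basis matrices as complex matrices. -/
noncomputable def modelMatrix (k : Index) : Matrix (Fin 27) (Fin 27) ℂ := toMatrix (basisMatrix k)

lemma isModel_modelMatrix : IsModel modelMatrix := ⟨1, Function.injective_id, fun _ => rfl⟩

lemma negTranspose_pos (k : Fin 24) :
    negTranspose ℂ _ (modelMatrix (.pos k)) = -modelMatrix (.neg k) :=
  congrArg Neg.neg (toMatrix_transpose (rootMatrix k)).symm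

lemma negTranspose_neg (k : Fin 24) :
    negTranspose ℂ _ (modelMatrix (.neg k)) = -modelMatrix (.pos k) := by
  have h : (modelMatrix (.neg k))ᵀ = modelMatrix (.pos k) := by
    rw [modelMatrix, basisMatrix, toMatrix_transpose, Matrix.transpose_transpose]
    rfl
  exact congrArg Neg.neg h

lemma negTranspose_coweight (i : Fin 4) :
    negTranspose ℂ _ (modelMatrix (.coweight i)) = -modelMatrix (.coweight i) := by
  have h : (modelMatrix (.coweight i))ᵀ = modelMatrix (.coweight i) := by
    rw [modelMatrix, basisMatrix, toMatrix_diagonal, Matrix.diagonal_transpose]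
  exact congrArg Neg.neg h

lemma ad_neg_simple_pow_lie (i j : Fin 4) :
    (ad ℂ _ (modelMatrix (.neg (simple i))) ^ (-CartanMatrix.F₄ i j).toNat)
      ⁅modelMatrix (.neg (simple i)), modelMatrix (.neg (simple j))⁆ = 0 := by
  have h := congrArg (negTranspose ℂ _) (isModel_modelMatrix.ad_simple_pow_lie i j)
  rw [map_ad_pow, LieHom.map_lie, negTranspose_pos, negTranspose_pos, map_neg, neg_pow,
    Module.End.mul_apply, map_zero, neg_lie, lie_neg, neg_neg] at h
  rcases neg_one_pow_eq_or (Module.End ℂ (Matrix (Fin 27) (Fin 27) ℂ))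
    (-CartanMatrix.F₄ i j).toNat with h1 | h1 <;> simpa [h1] using h

/-- The representation of the Lie algebra of type `F₄` by `27 × 27` matrices. -/
noncomputable def representation : f₄ ℂ →ₗ⁅ℂ⁆ Matrix (Fin 27) (Fin 27) ℂ :=
  serreLift (chevalley (coroot modelMatrix) (fun i => modelMatrix (.pos (simple i)))
    fun i => modelMatrix (.neg (simple i))) <| lift_chevalley_eq_zero
      (fun i j => isModel_modelMatrix.lie_toral_toral _ _)
      (fun i j => isModel_modelMatrix.lie_simple_neg_simple i j)
      (fun i j => by rw [coroot, isModel_modelMatrix.lie_toral_simple, Int.cast_smul_eq_zsmul])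
      (fun i j => by
        rw [coroot, isModel_modelMatrix.lie_toral_neg_simple, neg_smul, Int.cast_smul_eq_zsmul])
      isModel_modelMatrix.ad_simple_pow_lie ad_neg_simple_pow_lie

lemma modelMatrix_mem {S : LieSubalgebra ℂ (Matrix (Fin 27) (Fin 27) ℂ)}
    (hpos : ∀ i, modelMatrix (.pos (simple i)) ∈ S)
    (hneg : ∀ i, modelMatrix (.neg (simple i)) ∈ S) : ∀ k, modelMatrix k ∈ S
  | .pos k => isModel_modelMatrix.pos_mem hpos k
  | .neg k => by
    have h := isModel_modelMatrix.pos_mem (S := S.comap (negTranspose ℂ _)) (fun i => by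
      rw [LieSubalgebra.mem_comap, negTranspose_pos]
      exact S.neg_mem (hneg i)) k
    rw [LieSubalgebra.mem_comap, negTranspose_pos] at h
    exact neg_mem_iff.1 h
  | .coweight i => isModel_modelMatrix.coweight_mem hpos hneg i

lemma modelMatrix_mem_range (k : Index) : modelMatrix k ∈ representation.range :=
  modelMatrix_mem (fun i => mem_range_serreLift _ (.E i)) (fun i => mem_range_serreLift _ (.F i)) k

lemma negTranspose_mem_span {A : Matrix (Fin 27) (Fin 27) ℂ}
    (hA : A ∈ Submodule.span ℂ (Set.range modelMatrix)) :
    negTranspose ℂ _ A ∈ Submodule.span ℂ (Set.range modelMatrix) := by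
  have h : Submodule.span ℂ (Set.range modelMatrix) ≤
      (Submodule.span ℂ (Set.range modelMatrix)).comap (negTranspose ℂ (Fin 27)).toLinearMap := by
    refine Submodule.span_le.2 ?_
    rintro _ ⟨k, rfl⟩
    change negTranspose ℂ _ (modelMatrix k) ∈ Submodule.span ℂ (Set.range modelMatrix)
    cases k with
    | pos k => exact negTranspose_pos k ▸ neg_mem (Submodule.subset_span ⟨_, rfl⟩)
    | neg k => exact negTranspose_neg k ▸ neg_mem (Submodule.subset_span ⟨_, rfl⟩)
    | coweight i => exact negTranspose_coweight i ▸ neg_mem (Submodule.subset_span ⟨_, rfl⟩)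
  exact h hA

lemma pos_simple_mem_normalizing (i : Fin 4) :
    modelMatrix (.pos (simple i)) ∈ normalizing (Submodule.span ℂ (Set.range modelMatrix)) := by
  refine ⟨Submodule.subset_span ⟨_, rfl⟩, fun y hy => ?_⟩
  have h : Submodule.span ℂ (Set.range modelMatrix) ≤
      Submodule.comap (ad ℂ _ (modelMatrix (.pos (simple i))))
        (Submodule.span ℂ (Set.range modelMatrix)) := by
    refine Submodule.span_le.2 ?_
    rintro _ ⟨k, rfl⟩
    rw [SetLike.mem_coe, Submodule.mem_comap, ad_apply, isModel_modelMatrix.lie_simple]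
    exact eval_mem (S := (Submodule.span ℂ (Set.range modelMatrix)).toAddSubgroup)
      fun p _ => Submodule.subset_span ⟨p.1, rfl⟩
  exact h hy

lemma neg_simple_mem_normalizing (i : Fin 4) :
    modelMatrix (.neg (simple i)) ∈ normalizing (Submodule.span ℂ (Set.range modelMatrix)) := by
  refine ⟨Submodule.subset_span ⟨_, rfl⟩, fun y hy => ?_⟩
  have h := negTranspose_mem_span
    ((pos_simple_mem_normalizing i).2 _ (negTranspose_mem_span hy))
  have hinv : negTranspose ℂ _ (negTranspose ℂ _ y) = y := by simp [negTranspose]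
  rw [LieHom.map_lie, negTranspose_pos, hinv, neg_lie] at h
  exact neg_mem_iff.1 h

lemma range_representation_le :
    representation.range.toSubmodule ≤ Submodule.span ℂ (Set.range modelMatrix) := by
  have h : representation.range ≤ normalizing (Submodule.span ℂ (Set.range modelMatrix)) := by
    refine range_serreLift_le _ fun g => ?_
    cases g with
    | E i => exact pos_simple_mem_normalizing i
    | F i => exact neg_simple_mem_normalizing i
    | H i =>
      have h := LieSubalgebra.lie_mem _ (pos_simple_mem_normalizing i)
        (neg_simple_mem_normalizing i)
      rwa [isModel_modelMatrix.lie_simple_neg_simple, if_pos rfl] at h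
  exact fun x hx => (h hx).1

/-- The coordinates `coord` as linear forms on matrices. -/
noncomputable def coordForm : Index → Matrix (Fin 27) (Fin 27) ℂ →ₗ[ℂ] ℂ
  | .pos k => ((pivot k).2 : ℂ) • Matrix.entryLinearMap ℂ ℂ (pivot k).1.1 (pivot k).1.2
  | .neg k => ((pivot k).2 : ℂ) • Matrix.entryLinearMap ℂ ℂ (pivot k).1.2 (pivot k).1.1
  | .coweight i =>
    Matrix.entryLinearMap ℂ ℂ (pivot (simple i)).1.1 (pivot (simple i)).1.1 -
      Matrix.entryLinearMap ℂ ℂ (pivot (simple i)).1.2 (pivot (simple i)).1.2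

lemma coordForm_toMatrix (A : SparseMatrix (Fin 27)) (k : Index) :
    coordForm k (toMatrix A) = coord A k := by
  cases k <;> simp [coordForm, coord, toMatrix_apply, Prod.swap]

lemma linearIndependent_modelMatrix : LinearIndependent ℂ modelMatrix := by
  have hcoord (k l : Index) : coordForm k (modelMatrix l) = if k = l then 1 else 0 := by
    rw [modelMatrix, coordForm_toMatrix, coord_basisMatrix, Int.cast_ite, Int.cast_one,
      Int.cast_zero]
  exact .of_pairwise_dual_eq_zero_one _ coordForm (fun k l hkl => (hcoord k l).trans (if_neg hkl))
    fun k => (hcoord k k).trans (if_pos rfl)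

variable {L : Type*} [LieRing L] [LieAlgebra ℂ L]

lemma IsModel.map {b : Basis Index ℂ L} (hb : IsModel b) (φ : L ≃ₗ⁅ℂ⁆ L) :
    IsModel (b.map φ.toLinearEquiv) := by
  obtain ⟨ρ, hinj, hρ⟩ := hb
  exact ⟨ρ.comp φ.symm.toLieHom, hinj.comp φ.symm.injective, fun k => by
    rw [b.map_apply, ← hρ]
    exact congrArg ρ (φ.symm_apply_apply (b k))⟩

theorem exists_isModel_basis [LieAlgebra.IsSimple ℂ L] (φ : L ≃ₗ⁅ℂ⁆ f₄ ℂ) :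
    ∃ b : Basis Index ℂ L, IsModel b := by
  let ρ : L →ₗ⁅ℂ⁆ Matrix (Fin 27) (Fin 27) ℂ := representation.comp φ.toLieHom
  have hmem (k : Index) : ∃ x, ρ x = modelMatrix k := by
    obtain ⟨y, hy⟩ := modelMatrix_mem_range k
    exact ⟨φ.symm y, by simpa [ρ] using hy⟩
  choose m hm using hmem
  have hker : ρ.ker = ⊥ := by
    refine (IsSimple.eq_bot_or_eq_top (R := ℂ) ρ.ker).resolve_right fun h => ?_
    have h0 : m (.pos 0) ∈ ρ.ker := h ▸ LieSubmodule.mem_top _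
    exact linearIndependent_modelMatrix.ne_zero (.pos 0) ((hm _).symm.trans (LieHom.mem_ker.1 h0))
  have hinj : Function.Injective ρ := (LieHom.ker_eq_bot ρ).1 hker
  have hρm : ρ.toLinearMap ∘ m = modelMatrix := funext hm
  have hli : LinearIndependent ℂ m :=
    LinearIndependent.of_comp ρ.toLinearMap (hρm ▸ linearIndependent_modelMatrix)
  refine ⟨Basis.mk hli fun x _ => ?_, ρ, hinj, fun k => by rw [Basis.mk_apply]; exact hm k⟩
  have hx : ρ x ∈ (Submodule.span ℂ (Set.range m)).map ρ.toLinearMap := by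
    rw [Submodule.map_span, ← Set.range_comp, hρm]
    exact range_representation_le ⟨φ x, rfl⟩
  obtain ⟨z, hz, hzx⟩ := hx
  exact hinj hzx ▸ hz

end F4Model
end Models

section DominantCoweights
open LieAlgebra LieSubalgebra Module

section Reflection

variable {L : Type*} [LieRing L] [LieAlgebra ℂ L] [FiniteDimensional ℂ L] {s h e f : L}

lemma expAut_smul_sub_apply (hef : ⁅e, f⁆ = h) (he : ⁅h, e⁆ = (2 : ℂ) • e)
    (hf : ⁅h, f⁆ = (-2 : ℂ) • f) : expAut ((Real.pi / 2 : ℂ) • (e - f)) h = -h := by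
  have heh : ⁅e, h⁆ = (-2 : ℂ) • e := by rw [← lie_skew, he, neg_smul]
  have hfh : ⁅f, h⁆ = (2 : ℂ) • f := by rw [← lie_skew, hf, neg_smul, neg_neg]
  have hfe : ⁅f, e⁆ = -h := by rw [← lie_skew, hef]
  have heig (a : ℂ) (ha : a * a = -1) : ⁅(Real.pi / 2 : ℂ) • (e - f), h + a • (e + f)⁆ =
      (a * Real.pi) • (h + a • (e + f)) := by
    have haa : a * Real.pi * a = -Real.pi := by linear_combination Real.pi * ha
    simp only [smul_lie, sub_lie, lie_add, lie_smul, lie_self, heh, hfh, hef, hfe, smul_add,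
      smul_smul, haa]
    module
  have hI := expAut_apply_of_lie_eq_smul (heig Complex.I (by simp))
  have hnegI := expAut_apply_of_lie_eq_smul (heig (-Complex.I) (by simp))
  have hexp : Complex.exp (Complex.I * Real.pi) = -1 := by rw [mul_comm, Complex.exp_pi_mul_I]
  rw [hexp] at hI
  rw [neg_mul, Complex.exp_neg, hexp, inv_neg, inv_one] at hnegI
  have hdec : h = (1 / 2 : ℂ) • ((h + Complex.I • (e + f)) + (h + (-Complex.I) • (e + f))) := by
    module
  conv_lhs => rw [hdec]
  rw [map_smul, map_add, hI, hnegI]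
  module

lemma exists_aut_reflection {c : ℂ} (hef : ⁅e, f⁆ = h) (he : ⁅h, e⁆ = (2 : ℂ) • e)
    (hf : ⁅h, f⁆ = (-2 : ℂ) • f) (hse : ⁅s, e⁆ = c • e) (hsf : ⁅s, f⁆ = (-c) • f) :
    ∃ φ : L ≃ₗ⁅ℂ⁆ L, φ s = s - c • h := by
  refine ⟨expAut ((Real.pi / 2 : ℂ) • (e - f)), ?_⟩
  have heh : ⁅e, h⁆ = (-2 : ℂ) • e := by rw [← lie_skew, he, neg_smul]
  have hfh : ⁅f, h⁆ = (2 : ℂ) • f := by rw [← lie_skew, hf, neg_smul, neg_neg]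
  have hes : ⁅e, s⁆ = (-c) • e := by rw [← lie_skew, hse, neg_smul]
  have hfs : ⁅f, s⁆ = c • f := by rw [← lie_skew, hsf, neg_smul, neg_neg]
  have hfix : expAut ((Real.pi / 2 : ℂ) • (e - f)) (s - (c / 2) • h) = s - (c / 2) • h := by
    apply expAut_apply_of_lie_eq_zero
    simp only [smul_lie, sub_lie, lie_sub, lie_smul, heh, hfh, hes, hfs, smul_smul]
    module
  rw [map_sub, map_smul, expAut_smul_sub_apply hef he hf, sub_eq_iff_eq_add] at hfix
  rw [hfix]
  module

end Reflection

namespace F4Model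

/-- The eigenvalue of an integral coweight, given by its values on the simple roots, on a basis
element. -/
def weightAt (n : Fin 4 → ℤ) (k : Index) : ℤ := ∑ i, n i * weight k i

/-- The pairing of a coweight with the sum of the positive roots. -/
def height (n : Fin 4 → ℤ) : ℤ := ∑ i, n i * ∑ k, positiveRoot k i

lemma height_cartanMatrix : ∀ i, height (CartanMatrix.F₄ i) = 2 := by decide +kernel

lemma height_sub_mul (n n' : Fin 4 → ℤ) (c : ℤ) :
    height (fun j => n j - c * n' j) = height n - c * height n' := by
  simp only [height, sub_mul, Finset.sum_sub_distrib, Finset.mul_sum, mul_assoc]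

lemma weightAt_one_pos : ∀ k, 0 < weightAt 1 (.pos k) := by decide +kernel

lemma weightAt_neg (n : Fin 4 → ℤ) (k : Fin 24) : weightAt n (.neg k) = -weightAt n (.pos k) := by
  simp [weightAt, weight]

lemma weightAt_simple (n : Fin 4 → ℤ) (i : Fin 4) : weightAt n (.pos (simple i)) = n i := by
  simp [weightAt, weight_simple]

variable {L : Type*} [LieRing L] [LieAlgebra ℂ L]

lemma IsModel.lie_toral_intCast {m : Index → L} (hm : IsModel m) (n : Fin 4 → ℤ) (k : Index) :
    ⁅toral m fun i => (n i : ℂ), m k⁆ = (weightAt n k : ℂ) • m k := by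
  rw [hm.lie_toral]
  push_cast [weightAt]
  rfl

lemma toral_sub_smul (m : Index → L) (n n' : Fin 4 → ℂ) (c : ℂ) :
    toral m n - c • toral m n' = toral m fun j => n j - c * n' j := by
  simp [toral, Finset.smul_sum, sub_smul, mul_smul]

lemma toral_map (b : Basis Index ℂ L) (φ : L ≃ₗ⁅ℂ⁆ L) (n : Fin 4 → ℂ) :
    toral (b.map φ.toLinearEquiv) n = φ (toral b n) := by
  simp [toral]

lemma IsModel.mem_engel_toral_one {b : Basis Index ℂ L} (hb : IsModel b) {x : L} :
    x ∈ engel ℂ (toral b 1) ↔ ∃ n, x = toral b n := by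
  have hwt (k : Index) : ⁅toral b 1, b k⁆ = (weightAt 1 k : ℂ) • b k := by
    simpa using! hb.lie_toral_intCast 1 k
  rw [mem_engel_iff_of_basis hwt]
  constructor
  · intro hx
    have hroot (k : Index) (hk : k ∉ Set.range Index.coweight) : b.repr x k • b k = 0 := by
      have hne : (weightAt 1 k : ℂ) ≠ 0 := by
        cases k with
        | pos k => exact_mod_cast (weightAt_one_pos k).ne'
        | neg k => exact_mod_cast weightAt_neg 1 k ▸ neg_ne_zero.2 (weightAt_one_pos k).ne'
        | coweight i => exact absurd ⟨i, rfl⟩ hk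
      rw [repr_eq_zero_of_mem_adEigenspace hwt (mem_adEigenspace_zero.2 hx) hne, zero_smul]
    refine ⟨fun i => b.repr x (.coweight i), (b.sum_repr x).symm.trans ?_⟩
    exact (Fintype.sum_of_injective Index.coweight (fun _ _ => Index.coweight.inj) _ _ hroot
      fun _ => rfl).symm
  · rintro ⟨n, rfl⟩
    exact hb.lie_toral_toral 1 n

lemma IsModel.isCartanSubalgebra_engel_toral_one {b : Basis Index ℂ L} (hb : IsModel b) :
    (engel ℂ (toral b 1)).IsCartanSubalgebra := by
  have : IsLieAbelian (engel ℂ (toral b 1)) := ⟨fun ⟨x, hx⟩ ⟨y, hy⟩ => by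
    obtain ⟨n, rfl⟩ := hb.mem_engel_toral_one.1 hx
    obtain ⟨n', rfl⟩ := hb.mem_engel_toral_one.1 hy
    exact Subtype.ext (hb.lie_toral_toral n n')⟩
  exact ⟨inferInstance, normalizer_engel _ _⟩

variable [FiniteDimensional ℂ L]

lemma IsModel.exists_aut_simple_reflection {b : Basis Index ℂ L} (hb : IsModel b) (n : Fin 4 → ℂ)
    (i : Fin 4) : ∃ φ : L ≃ₗ⁅ℂ⁆ L, toral b n =
      toral (b.map φ.toLinearEquiv) fun j => n j - n i * (CartanMatrix.F₄ i j : ℂ) := by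
  have hdiag : (CartanMatrix.F₄ i i : ℂ) = 2 := by
    have : CartanMatrix.F₄ i i = 2 := by revert i; decide
    exact_mod_cast this
  obtain ⟨φ, hφ⟩ := exists_aut_reflection (s := toral b n) (h := coroot b i)
    (by rw [hb.lie_simple_neg_simple, if_pos rfl])
    (by rw [coroot, hb.lie_toral_simple, hdiag])
    (by rw [coroot, hb.lie_toral_neg_simple, hdiag])
    (hb.lie_toral_simple n i) (hb.lie_toral_neg_simple n i)
  refine ⟨φ.symm, ?_⟩
  rw [toral_map, LieEquiv.eq_symm_apply, hφ, coroot, toral_sub_smul]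

lemma finite_setOf_isModel_eq_toral (s : L) :
    {n : Fin 4 → ℤ | ∃ b : Basis Index ℂ L, IsModel b ∧ s = toral b fun i => (n i : ℂ)}.Finite := by
  refine (Set.Finite.pi' fun _ : Fin 4 => (ad ℂ L s).finite_hasEigenvalue.preimage
    (f := fun k : ℤ => (k : ℂ)) Int.cast_injective.injOn).subset ?_
  rintro n ⟨b, hb, rfl⟩ i
  exact Module.End.hasEigenvalue_of_hasEigenvector
    ⟨Module.End.mem_eigenspace_iff.2 (hb.lie_toral_simple _ i), b.ne_zero _⟩

variable [IsKilling ℂ L]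

lemma IsModel.exists_isModel_eq_toral {b : Basis Index ℂ L} (hb : IsModel b) {s : L}
    (hs : (ad ℂ L s).IsSemisimple) :
    ∃ b' : Basis Index ℂ L, IsModel b' ∧ ∃ n, s = toral b' n := by
  obtain ⟨y, hy, hsy⟩ := exists_isCartanSubalgebra_engel_mem hs
  obtain ⟨φ, hφ⟩ := exists_aut_engel hb.isCartanSubalgebra_engel_toral_one hy
  obtain ⟨n, hn⟩ := hb.mem_engel_toral_one.1
    ((hφ (φ.symm s)).1 ((φ.apply_symm_apply s).symm ▸ hsy))
  exact ⟨_, hb.map φ, n, by rw [toral_map, ← hn, LieEquiv.apply_symm_apply]⟩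

variable {h e f : L}

lemma IsModel.exists_isModel_eq_toral_intCast {b : Basis Index ℂ L} (hb : IsModel b)
    (ht : IsSl2Triple h e f) (he : IsNilpotent (ad ℂ L e)) (hs : (ad ℂ L h).IsSemisimple) :
    ∃ n : Fin 4 → ℤ, ∃ b' : Basis Index ℂ L, IsModel b' ∧ h = toral b' fun i => (n i : ℂ) := by
  obtain ⟨b', hb', n, hn⟩ := hb.exists_isModel_eq_toral hs
  have hint (i : Fin 4) : ∃ k : ℤ, n i = k :=
    exists_eq_intCast_of_mem_adEigenspace ht he (b'.ne_zero (.pos (simple i)))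
      (mem_adEigenspace.2 (hn ▸ hb'.lie_toral_simple n i))
  choose k hk using hint
  exact ⟨k, b', hb', hn.trans (congrArg _ (funext hk))⟩

-- A reflection in a simple root on which a coweight is negative increases its height.
lemma IsModel.exists_dominant {b : Basis Index ℂ L} (hb : IsModel b) (ht : IsSl2Triple h e f)
    (he : IsNilpotent (ad ℂ L e)) (hs : (ad ℂ L h).IsSemisimple) :
    ∃ n : Fin 4 → ℤ, (∀ i, 0 ≤ n i) ∧
      ∃ b' : Basis Index ℂ L, IsModel b' ∧ h = toral b' fun i => (n i : ℂ) := by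
  obtain ⟨n, ⟨b', hb', hn⟩, hmax⟩ := Set.exists_max_image _ height
    (finite_setOf_isModel_eq_toral h) (hb.exists_isModel_eq_toral_intCast ht he hs)
  refine ⟨n, fun i => ?_, b', hb', hn⟩
  obtain ⟨φ, hφ⟩ := hb'.exists_aut_simple_reflection (fun j => (n j : ℂ)) i
  have hle := hmax (fun j => n j - n i * CartanMatrix.F₄ i j)
    ⟨_, hb'.map φ, by push_cast; exact hn.trans hφ⟩
  rw [height_sub_mul, height_cartanMatrix] at hle
  linarith

end F4Model
end DominantCoweights

section NormalForm
open LieAlgebra Module IntComb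

namespace F4Model

variable {L : Type*} [LieRing L] [LieAlgebra ℂ L] {b : Basis Index ℂ L}

lemma IsModel.weight_eq_of_repr_lie_ne_zero (hb : IsModel b) {k l p : Index}
    (h : b.repr ⁅b k, b l⁆ p ≠ 0) : weight p = weight k + weight l := by
  ext j
  by_contra hne
  have hmem (i : Index) : b i ∈ adEigenspace (b (.coweight j)) (weight i j : ℂ) :=
    mem_adEigenspace.2 (hb.lie_coweight j i)
  refine h (repr_eq_zero_of_mem_adEigenspace (hb.lie_coweight j)
    (lie_mem_adEigenspace (hmem k) (hmem l) rfl) fun hp => hne ?_)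
  exact_mod_cast hp

lemma eq_or_weight_nonneg_of_eq_add : ∀ k i l,
    weight l = weight (.pos k) + weight (.neg (simple i)) → k = simple i ∨ ∀ j, 0 ≤ weight l j := by
  decide +kernel

lemma weightAt_nonneg {n : Fin 4 → ℤ} (hn : ∀ i, 0 ≤ n i) {k : Index} (hk : ∀ j, 0 ≤ weight k j) :
    0 ≤ weightAt n k :=
  Finset.sum_nonneg fun i _ => mul_nonneg (hn i) (hk i)

lemma positiveRoot_nonneg : ∀ k j, 0 ≤ positiveRoot k j := by decide +kernel

lemma exists_eq_pos_of_weightAt_pos {n : Fin 4 → ℤ} (hn : ∀ i, 0 ≤ n i) {k : Index}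
    (hk : 0 < weightAt n k) : ∃ k', k = .pos k' := by
  cases k with
  | pos k => exact ⟨k, rfl⟩
  | neg k =>
    have := weightAt_nonneg hn (k := .pos k) (positiveRoot_nonneg k)
    rw [weightAt_neg] at hk
    omega
  | coweight i => simp [weightAt, weight] at hk

lemma IsModel.lie_neg_simple_eq_zero (hb : IsModel b) {n : Fin 4 → ℤ} (hn : ∀ i, 0 ≤ n i)
    {i : Fin 4} (hi : 3 ≤ n i) {k : Index} (hk : weightAt n k = 2) :
    ⁅b k, b (.neg (simple i))⁆ = 0 := by
  refine b.ext_elem fun l => ?_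
  by_contra hne
  rw [map_zero, Finsupp.zero_apply] at hne
  have hl := hb.weight_eq_of_repr_lie_ne_zero hne
  obtain ⟨k, rfl⟩ := exists_eq_pos_of_weightAt_pos hn (hk ▸ two_pos)
  rcases eq_or_weight_nonneg_of_eq_add k i l hl with rfl | hpos
  · rw [weightAt_simple] at hk
    omega
  · have hsum : weightAt n l = weightAt n (.pos k) + weightAt n (.neg (simple i)) := by
      simp only [weightAt, hl, Pi.add_apply, mul_add, Finset.sum_add_distrib]
    have := weightAt_nonneg hn hpos
    rw [weightAt_neg, weightAt_simple] at hsum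
    omega

variable {h e f : L}

-- If `n i` is at least three, then the root vector of the negative of the `i`-th simple root is
-- annihilated by `ad e`, although its weight is negative.
lemma IsModel.le_two [FiniteDimensional ℂ L] (hb : IsModel b) {n : Fin 4 → ℤ} (hn : ∀ i, 0 ≤ n i)
    (hh : h = toral b fun i => (n i : ℂ)) (ht : IsSl2Triple h e f) (i : Fin 4) : n i ≤ 2 := by
  by_contra! hi
  have hwt := hb.lie_toral_intCast n
  rw [← hh] at hwt
  have he : e ∈ adEigenspace h ((2 : ℤ) : ℂ) :=
    mem_adEigenspace.2 (by exact_mod_cast ht.lie_h_e_smul ℂ)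
  have hlie : ⁅e, b (.neg (simple i))⁆ = 0 := by
    rw [eq_sum_of_mem_adEigenspace hwt he, sum_lie]
    refine Finset.sum_eq_zero fun k hk => ?_
    rw [smul_lie, hb.lie_neg_simple_eq_zero hn hi (Finset.mem_filter.1 hk).2, smul_zero]
  obtain ⟨m, hm⟩ := exists_eq_natCast_of_lie_e_eq_zero ht (b.ne_zero _)
    (mem_adEigenspace.2 (hwt (.neg (simple i)))) hlie
  rw [weightAt_neg, weightAt_simple] at hm
  have : -n i = m := by exact_mod_cast hm
  omega

/-- The weighted Dynkin diagram of the nilpotent orbit `F₄(a₃)`. -/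
def neutralCoweight : Fin 4 → ℤ := ![0, 0, 2, 0]

lemma eq_neutralCoweight_of_card_fin : ∀ m : Fin 4 → Fin 3,
    Finset.card {k | weightAt (fun i => (m i : ℕ)) k = 0} =
      Finset.card {k | weightAt (fun i => (m i : ℕ)) k = 2} →
    12 + Finset.card {k | 2 ≤ weightAt (fun i => (m i : ℕ)) k} =
      Finset.card {k | 0 ≤ weightAt (fun i => (m i : ℕ)) k} →
    (fun i => ((m i : ℕ) : ℤ)) = neutralCoweight := by
  decide +kernel

lemma eq_neutralCoweight_of_card {n : Fin 4 → ℤ} (hn : ∀ i, 0 ≤ n i) (hn2 : ∀ i, n i ≤ 2)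
    (heven : Finset.card {k | weightAt n k = 0} = Finset.card {k | weightAt n k = 2})
    (hcard : 12 + Finset.card {k | 2 ≤ weightAt n k} = Finset.card {k | 0 ≤ weightAt n k}) :
    n = neutralCoweight := by
  have hfin (i : Fin 4) : ∃ m : Fin 3, n i = (m : ℕ) :=
    ⟨⟨(n i).toNat, by have := hn2 i; omega⟩, (Int.toNat_of_nonneg (hn i)).symm⟩
  choose m hm using hfin
  obtain rfl : n = fun i => ((m i : ℕ) : ℤ) := funext hm
  exact eq_neutralCoweight_of_card_fin m heven hcard

/-- The nilpotent element of the normal form, a sum of root vectors of four linearly independent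
long roots. -/
def nilpotentComb : IntComb Index := [(.pos 2, 1), (.pos 8, 1), (.pos 12, 1), (.pos 16, 1)]

/-- The basis elements of degree two for `neutralCoweight`, each with an element whose bracket with
`nilpotentComb` is twice the basis element. -/
def levelTwoPreimage : List (Index × IntComb Index) :=
  [(.pos 2, [(.coweight 1, -1), (.coweight 2, 2)]),
   (.pos 5, [(.pos 1, 2)]),
   (.pos 6, [(.pos 3, -2), (.coweight 0, -1), (.coweight 3, 2)]),
   (.pos 7, [(.pos 4, 2)]),
   (.pos 8, [(.coweight 1, 1), (.coweight 3, -2)]),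
   (.pos 9, [(.pos 1, 2), (.neg 1, -2)]),
   (.pos 10, [(.pos 0, 2), (.neg 0, -2)]),
   (.pos 11, [(.neg 4, -2)]),
   (.pos 12, [(.coweight 0, -1), (.coweight 3, 2)]),
   (.pos 13, [(.neg 3, 2), (.coweight 1, -1), (.coweight 3, 2)]),
   (.pos 14, [(.neg 0, 2)]),
   (.pos 16, [(.coweight 0, 1)])]

lemma hasBracket_levelTwoPreimage :
    ∀ p ∈ levelTwoPreimage, HasBracket p.2 nilpotentComb [(p.1, 2)] := by
  decide +kernel

lemma weightAt_levelTwoPreimage :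
    ∀ p ∈ levelTwoPreimage, ∀ q ∈ p.2, weightAt neutralCoweight q.1 = 0 := by
  decide +kernel

lemma exists_mem_levelTwoPreimage :
    ∀ k, weightAt neutralCoweight k = 2 → ∃ p ∈ levelTwoPreimage, p.1 = k := by
  decide +kernel

lemma weightAt_nilpotentComb : ∀ p ∈ nilpotentComb, weightAt neutralCoweight p.1 = 2 := by
  decide +kernel

lemma IsModel.eval_mem_adEigenspace {m : Index → L} (hm : IsModel m) {n : Fin 4 → ℤ} {c : ℤ}
    {w : IntComb Index} (hw : ∀ p ∈ w, weightAt n p.1 = c) :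
    eval m w ∈ adEigenspace (toral m fun i => (n i : ℂ)) (c : ℂ) :=
  eval_mem (S := (adEigenspace (toral m fun i => (n i : ℂ)) (c : ℂ)).toAddSubgroup) fun p hp =>
    mem_adEigenspace.2 (hw p hp ▸ hm.lie_toral_intCast n p.1)

lemma IsModel.hasOpenOrbit_nilpotentComb (hb : IsModel b) :
    HasOpenOrbit (toral b fun i => (neutralCoweight i : ℂ)) 2 (eval b nilpotentComb) := by
  set s := toral b fun i => (neutralCoweight i : ℂ)
  have hle : adEigenspace s ((2 : ℤ) : ℂ) ≤
      (adEigenspace s ((0 : ℤ) : ℂ)).map (ad ℂ L (eval b nilpotentComb)) := by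
    rw [adEigenspace_eq_span (hb.lie_toral_intCast neutralCoweight), Submodule.span_le]
    rintro _ ⟨k, hk, rfl⟩
    obtain ⟨p, hp, rfl⟩ := exists_mem_levelTwoPreimage k hk
    have hlie := hb.lie_eval (hasBracket_levelTwoPreimage p hp)
    refine ⟨(-1 / 2 : ℂ) • eval b p.2, Submodule.smul_mem _ _
      (hb.eval_mem_adEigenspace (weightAt_levelTwoPreimage p hp)), ?_⟩
    rw [← lie_skew, eval_cons, eval_nil, add_zero] at hlie
    rw [ad_apply, lie_smul, ← neg_neg ⁅eval b nilpotentComb, _⁆, hlie, ← Int.cast_smul_eq_zsmul ℂ]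
    module
  intro y hy
  obtain ⟨u, hu, rfl⟩ := hle (by exact_mod_cast hy)
  exact ⟨-u, neg_mem (by exact_mod_cast hu), by rw [neg_lie, lie_skew, ad_apply]⟩

lemma hasOpenOrbit_of_isSl2Triple [FiniteDimensional ℂ L] [IsKilling ℂ L] (ht : IsSl2Triple h e f)
    (hs : (ad ℂ L h).IsSemisimple) : HasOpenOrbit h 2 e := fun y hy => by
  obtain ⟨u, hu, rfl⟩ := exists_lie_e_eq_of_one_le ht hs (c := 2) one_le_two (by exact_mod_cast hy)
  rw [sub_self, Int.cast_zero] at hu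
  exact ⟨-u, neg_mem hu, by rw [neg_lie, lie_skew]⟩

/-- The basis `b` has the brackets of the basis matrices, and it expresses `h` and `e` by the
chosen representatives `neutralCoweight` and `nilpotentComb` of the orbit `F₄(a₃)`. -/
structure IsNormalForm (b : Basis Index ℂ L) (h e : L) : Prop where
  isModel : IsModel b
  neutral_eq : h = toral b fun i => (neutralCoweight i : ℂ)
  nilpotent_eq : e = eval b nilpotentComb

theorem exists_isNormalForm [FiniteDimensional ℂ L] [IsKilling ℂ L] (hb : IsModel b)
    (ht : IsSl2Triple h e f) (he : IsDistinguished L e)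
    (hdim : finrank ℂ (centralizer L e) = 12) : ∃ b', IsNormalForm b' h e := by
  have hs := (he.isSemisimple_ad_and_eq_zero ht).1
  obtain ⟨n, hn, b, hb, hh⟩ := hb.exists_dominant ht (he.isNilpotent_ad (lie_self e)) hs
  have hwt : ∀ k, ⁅h, b k⁆ = (weightAt n k : ℂ) • b k := hh ▸ hb.lie_toral_intCast n
  obtain rfl : n = neutralCoweight := eq_neutralCoweight_of_card hn (hb.le_two hn hh ht)
    (he.card_weight_zero_eq ht hwt) (hdim ▸ finrank_centralizer_add_card ht hs hwt)
  have hmem : eval b nilpotentComb ∈ adEigenspace h 2 := by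
    rw [hh]
    exact_mod_cast hb.eval_mem_adEigenspace weightAt_nilpotentComb
  obtain ⟨φ, hφh, hφe⟩ := HasOpenOrbit.exists_aut_eq (hh ▸ hb.hasOpenOrbit_nilpotentComb)
    (hasOpenOrbit_of_isSl2Triple ht hs) hmem (mem_adEigenspace.2 (ht.lie_h_e_smul ℂ))
  refine ⟨b.map φ.toLinearEquiv, hb.map φ, ?_, ?_⟩
  · rw [toral_map, ← hh, hφh]
  · rw [← hφe]
    exact map_eval (φ.toLinearEquiv : L →+ L) b nilpotentComb

end F4Model
end NormalForm

section CenterOfCentralizer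
open LieAlgebra Module IntComb

section Distinguished
variable {L : Type*} [LieRing L] [LieAlgebra ℂ L] {h e f : L}

lemma lie_f_lie_e_eq_two_smul (ht : IsSl2Triple h e f)
    (hzero : ∀ x : L, ⁅e, x⁆ = 0 → ⁅h, x⁆ = 0 → x = 0) {k : L} (hk : ⁅h, k⁆ = 0)
    (hek : ⁅e, ⁅e, k⁆⁆ = 0) : ⁅f, ⁅e, k⁆⁆ = (2 : ℂ) • k := by
  have hhek : ⁅h, ⁅e, k⁆⁆ = (2 : ℂ) • ⁅e, k⁆ := by
    rw [leibniz_lie h e, hk, ht.lie_h_e_smul ℂ, lie_zero, add_zero, smul_lie]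
  refine sub_eq_zero.1 (hzero _ ?_ ?_)
  · rw [lie_sub, leibniz_lie, ht.lie_e_f, hek, lie_zero, add_zero, hhek, lie_smul, sub_self]
  · rw [lie_sub, leibniz_lie, ht.lie_lie_smul_f ℂ, hhek, lie_smul, lie_smul, hk, neg_lie, smul_lie]
    module

lemma exists_lie_lie_f_eq_of_lie_lie_f_eq_zero (ht : IsSl2Triple h e f) {c r : ℂ} (hc : c ≠ 0)
    (hr : r ≠ 0) {z w : L} (hez : ⁅z, e⁆ = 0) (hhz : ⁅h, z⁆ = c • z) (hw : ⁅⁅f, z⁆, w⁆ = 0) :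
    ∃ x : L, ⁅x, e⁆ = 0 ∧ ⁅⁅f, x⁆, r • e + w⁆ = z := by
  have hfze : ⁅⁅f, z⁆, e⁆ = -c • z := by
    rw [lie_lie, hez, ← lie_skew f e, ht.lie_e_f, lie_neg, lie_zero, zero_sub, neg_neg,
      ← lie_skew, hhz, neg_smul]
  refine ⟨(-(r * c)⁻¹) • z, by rw [smul_lie, hez, smul_zero], ?_⟩
  rw [lie_smul, smul_lie, lie_add, hw, add_zero, lie_smul, hfze, smul_smul, smul_smul]
  have hone : -(r * c)⁻¹ * r * -c = 1 := by field_simp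
  rw [hone, one_smul]

end Distinguished

lemma IntComb.repr_eval {ι L : Type*} [DecidableEq ι] [AddCommGroup L] [Module ℂ L]
    (b : Basis ι ℂ L) (w : IntComb ι) (k : ι) : b.repr (eval b w) k = coeff w k := by
  induction w with
  | nil => simp
  | cons p w ih => simp [ih, Finsupp.single_apply]

namespace F4Model

/-- A basis of the centralizer of the nilpotent element of the normal form. -/
def centralizerComb : Fin 12 → IntComb Index :=
  ![[(.pos 9, 1)], [(.pos 10, 1)], [(.pos 7, -1), (.pos 11, 1)], [(.pos 6, 1), (.pos 12, 1)],
    [(.pos 8, -1), (.pos 13, 1)], nilpotentComb, [(.pos 17, 1)], [(.pos 19, 1)], [(.pos 20, 1)],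
    [(.pos 15, 1), (.pos 18, -1), (.pos 21, 1)], [(.pos 22, 1)], [(.pos 23, 1)]]

/-- Basis elements of the Lie algebra each of which occurs in exactly one element of the basis of
the centralizer. -/
def centralizerPivot : Fin 12 → Index :=
  ![.pos 9, .pos 10, .pos 11, .pos 6, .pos 13, .pos 16, .pos 17, .pos 19, .pos 20, .pos 15,
    .pos 22, .pos 23]

/-- The brackets `⁅c i, c j⁆` of the elements of the basis `c` of the centralizer, as a function of
`j < 4` and `i`. -/
def centralizerBracket : Fin 4 → Fin 12 → IntComb Index :=
  ![![[], [(.pos 19, -1)], [(.pos 17, -1)], [], [(.pos 20, -1)], [], [], [], [(.pos 23, -2)], [],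
      [], []],
    ![[(.pos 19, 1)], [], [(.pos 20, -1)], [(.pos 17, 1)], [], [], [(.pos 22, 2)], [], [], [],
      [], []],
    ![[(.pos 17, 1)], [(.pos 20, 1)], [], [(.pos 19, -1)], [(.pos 19, -1)], [], [],
      [(.pos 22, 2), (.pos 23, 2)], [], [], [], []],
    ![[], [(.pos 17, -1)], [(.pos 19, 1)], [], [(.pos 15, 1), (.pos 18, -1), (.pos 21, 1)], [],
      [], [], [], [(.pos 23, 2)], [], []]]

/-- For each noncentral element of the basis `c` of the centralizer, a `j` and a coordinate which
vanishes on all brackets `⁅c i, c j⁆` except for the given `i`. -/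
def centralizerTest : Fin 12 → Fin 4 × Index :=
  ![(1, .pos 19), (0, .pos 19), (1, .pos 20), (1, .pos 17), (0, .pos 20), (0, .pos 0),
    (1, .pos 22), (2, .pos 22), (0, .pos 23), (3, .pos 23), (0, .pos 0), (0, .pos 0)]

/-- The labels of the two basis elements which together with the nilpotent element span the center
of its centralizer. -/
def centralIndex : Fin 2 → Index := ![.pos 22, .pos 23]

/-- Elements `k` of degree zero which satisfy `⁅e, ⁅e, k⁆⁆ = 0`. -/
def levelZeroComb : Fin 3 → IntComb Index :=
  ![[(.pos 3, 1), (.coweight 0, 1), (.coweight 3, -2)],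
    [(.neg 3, -1), (.coweight 1, 1), (.coweight 3, -2)], [(.coweight 2, -1)]]

/-- The matrices, acting on row vectors, by which the elements `levelZeroComb` act on the span of
the two basis elements `centralIndex`. -/
def levelZeroAction : Fin 3 → Matrix (Fin 2) (Fin 2) ℤ :=
  ![!![0, 1; 0, -2], !![2, 0; -1, 0], !![-3, 0; 0, -3]]

lemma coeff_centralizerComb : ∀ k l,
    coeff (centralizerComb l) (centralizerPivot k) = if k = l then 1 else 0 := by
  decide +kernel

lemma hasBracket_centralizerComb_nilpotentComb :
    ∀ i, HasBracket (centralizerComb i) nilpotentComb [] := by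
  decide +kernel

lemma hasBracket_centralizerComb : ∀ (j : Fin 4) (i : Fin 12),
    HasBracket (centralizerComb i) (centralizerComb (j.castLE (by decide)))
      (centralizerBracket j i) := by
  decide +kernel

lemma coeff_centralizerBracket : ∀ i ∉ ({5, 10, 11} : Finset (Fin 12)),
    coeff (centralizerBracket (centralizerTest i).1 i) (centralizerTest i).2 ≠ 0 ∧
      ∀ j ≠ i, coeff (centralizerBracket (centralizerTest i).1 j) (centralizerTest i).2 = 0 := by
  decide +kernel

lemma hasBracket_centralIndex_centralizerComb :
    ∀ j i, HasBracket [(centralIndex j, 1)] (centralizerComb i) [] := by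
  decide +kernel

lemma exists_hasBracket_nilpotentComb_levelZeroComb : ∀ i, ∃ j,
    HasBracket nilpotentComb (levelZeroComb i) (centralizerComb j) := by
  decide +kernel

lemma hasBracket_levelZeroComb_centralIndex : ∀ i j,
    HasBracket (levelZeroComb i) [(centralIndex j, 1)]
      [(centralIndex 0, levelZeroAction i j 0), (centralIndex 1, levelZeroAction i j 1)] := by
  decide +kernel

lemma weightAt_levelZeroComb : ∀ i, ∀ p ∈ levelZeroComb i, weightAt neutralCoweight p.1 = 0 := by
  decide +kernel

lemma weightAt_centralIndex : ∀ j, weightAt neutralCoweight (centralIndex j) = 6 := by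
  decide +kernel

lemma weightAt_ne_ten : ∀ k, weightAt neutralCoweight k ≠ 10 := by
  decide +kernel

variable {L : Type*} [LieRing L] [LieAlgebra ℂ L] {b : Basis Index ℂ L} {h e f : L}

namespace IsNormalForm

lemma lie_basis (hn : IsNormalForm b h e) (k : Index) :
    ⁅h, b k⁆ = (weightAt neutralCoweight k : ℂ) • b k :=
  hn.neutral_eq ▸ hn.isModel.lie_toral_intCast _ k

lemma centralizer_eq_span [FiniteDimensional ℂ L] (hn : IsNormalForm b h e)
    (hdim : finrank ℂ (centralizer L e) = 12) : (centralizer L e).toSubmodule =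
      Submodule.span ℂ (Set.range fun i => eval b (centralizerComb i)) := by
  have hcoord (k l : Fin 12) :
      b.coord (centralizerPivot k) (eval b (centralizerComb l)) = if k = l then 1 else 0 := by
    rw [Basis.coord_apply, IntComb.repr_eval, coeff_centralizerComb, Int.cast_ite, Int.cast_one,
      Int.cast_zero]
  have hli : LinearIndependent ℂ fun i => eval b (centralizerComb i) :=
    .of_pairwise_dual_eq_zero_one _ (fun i => b.coord (centralizerPivot i))
      (fun k l hkl => (hcoord k l).trans (if_neg hkl)) fun k => (hcoord k k).trans (if_pos rfl)
  have hle : Submodule.span ℂ (Set.range fun i => eval b (centralizerComb i)) ≤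
      (centralizer L e).toSubmodule := by
    refine Submodule.span_le.2 ?_
    rintro _ ⟨i, rfl⟩
    exact hn.nilpotent_eq ▸ hn.isModel.lie_eval (hasBracket_centralizerComb_nilpotentComb i)
  refine (Submodule.eq_of_le_of_finrank_eq hle ?_).symm
  rw [finrank_span_eq_card hli, Fintype.card_fin]
  exact hdim.symm

lemma exists_eq_sum [FiniteDimensional ℂ L] (hn : IsNormalForm b h e)
    (hdim : finrank ℂ (centralizer L e) = 12) {x : L} (hx : ⁅x, e⁆ = 0) :
    ∃ a : Fin 12 → ℂ, x = ∑ i, a i • eval b (centralizerComb i) := by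
  have hmem : x ∈ (centralizer L e).toSubmodule := hx
  rw [hn.centralizer_eq_span hdim, Submodule.mem_span_range_iff_exists_fun] at hmem
  exact hmem.imp fun _ => Eq.symm

lemma coeff_eq_zero_of_lie_eq_zero (hn : IsNormalForm b h e) {a : Fin 12 → ℂ}
    (ha : ∀ j, ⁅∑ i, a i • eval b (centralizerComb i), eval b (centralizerComb j)⁆ = 0)
    {i : Fin 12} (hi : i ∉ ({5, 10, 11} : Finset (Fin 12))) : a i = 0 := by
  obtain ⟨hne, hzero⟩ := coeff_centralizerBracket i hi
  have hsum := ha ((centralizerTest i).1.castLE (by decide))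
  simp only [sum_lie, smul_lie, hn.isModel.lie_eval (hasBracket_centralizerComb _ _)] at hsum
  have hcoeff := congrArg (b.coord (centralizerTest i).2) hsum
  simp only [map_sum, map_smul, map_zero, smul_eq_mul, Basis.coord_apply, IntComb.repr_eval]
    at hcoeff
  rw [Finset.sum_eq_single i (fun j _ hj => by rw [hzero j hj, Int.cast_zero, mul_zero])
    (by simp)] at hcoeff
  exact (mul_eq_zero.1 hcoeff).resolve_right (Int.cast_ne_zero.2 hne)

lemma lie_centralIndex_eq_zero [FiniteDimensional ℂ L] (hn : IsNormalForm b h e)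
    (hdim : finrank ℂ (centralizer L e) = 12) (j : Fin 2) {y : L} (hy : ⁅y, e⁆ = 0) :
    ⁅b (centralIndex j), y⁆ = 0 := by
  obtain ⟨a, rfl⟩ := hn.exists_eq_sum hdim hy
  have hzero (i : Fin 12) := hn.isModel.lie_eval (hasBracket_centralIndex_centralizerComb j i)
  simp only [eval_cons, eval_nil, one_smul, add_zero] at hzero
  simp [lie_sum, hzero]

lemma mem_zCenter_iff [FiniteDimensional ℂ L] (hn : IsNormalForm b h e)
    (hdim : finrank ℂ (centralizer L e) = 12) {z : L} : z ∈ zCenter L e ↔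
      ∃ r s t : ℂ, z = r • e + (s • b (centralIndex 0) + t • b (centralIndex 1)) := by
  constructor
  · rintro ⟨hze, hz⟩
    obtain ⟨a, rfl⟩ := hn.exists_eq_sum hdim hze
    have ha {i : Fin 12} := hn.coeff_eq_zero_of_lie_eq_zero (a := a) (i := i) fun j =>
      hz _ (hn.nilpotent_eq ▸ hn.isModel.lie_eval (hasBracket_centralizerComb_nilpotentComb j))
    refine ⟨a 5, a 10, a 11, ?_⟩
    rw [← Finset.sum_subset (Finset.subset_univ ({5, 10, 11} : Finset (Fin 12)))
      fun i _ hi => by rw [ha hi, zero_smul], Finset.sum_insert (by decide),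
      Finset.sum_insert (by decide), Finset.sum_singleton, hn.nilpotent_eq]
    simp [centralizerComb, centralIndex]
  · rintro ⟨r, s, t, rfl⟩
    have hz (y : L) (hy : ⁅y, e⁆ = 0) :
        ⁅r • e + (s • b (centralIndex 0) + t • b (centralIndex 1)), y⁆ = 0 := by
      simp [lie_eq_zero_comm.1 hy, hn.lie_centralIndex_eq_zero hdim _ hy]
    exact ⟨hz e (lie_self e), hz⟩

lemma zCenter_eq_span [FiniteDimensional ℂ L] (hn : IsNormalForm b h e)
    (hdim : finrank ℂ (centralizer L e) = 12) : zCenter L e =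
      Submodule.span ℂ (Set.range ![e, b (centralIndex 0), b (centralIndex 1)]) := by
  ext z
  rw [hn.mem_zCenter_iff hdim, Submodule.mem_span_range_iff_exists_fun]
  constructor
  · rintro ⟨r, s, t, rfl⟩
    exact ⟨![r, s, t], by simp [Fin.sum_univ_three, add_assoc]⟩
  · rintro ⟨c, rfl⟩
    exact ⟨c 0, c 1, c 2, by simp [Fin.sum_univ_three, add_assoc]⟩

lemma linearIndependent_center (hn : IsNormalForm b h e) :
    LinearIndependent ℂ ![e, b (centralIndex 0), b (centralIndex 1)] := by
  have he (k : Index) := IntComb.repr_eval b nilpotentComb k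
  rw [← hn.nilpotent_eq] at he
  refine .of_pairwise_dual_eq_zero_one _
    (fun i : Fin 3 => b.coord (![.pos 2, centralIndex 0, centralIndex 1] i))
    (fun k l hkl => ?_) fun k => ?_
  · fin_cases k <;> fin_cases l <;> simp [he, nilpotentComb, centralIndex] at hkl ⊢
  · fin_cases k <;> simp [he, nilpotentComb, centralIndex]

lemma lie_central (hn : IsNormalForm b h e) (s t : ℂ) :
    ⁅h, s • b (centralIndex 0) + t • b (centralIndex 1)⁆ =
      (6 : ℂ) • (s • b (centralIndex 0) + t • b (centralIndex 1)) := by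
  simp only [lie_add, lie_smul, hn.lie_basis, weightAt_centralIndex]
  push_cast
  module

lemma exists_eq_of_lie_eq_smul [FiniteDimensional ℂ L] (hn : IsNormalForm b h e)
    (hdim : finrank ℂ (centralizer L e) = 12) (ht : IsSl2Triple h e f) {m : ℂ} {z : L}
    (hz : z ∈ zCenter L e) (hm : ⁅h, z⁆ = m • z) :
    ∃ r s t : ℂ, z = r • e + (s • b (centralIndex 0) + t • b (centralIndex 1)) ∧
      (2 - m) * r = 0 ∧ (6 - m) * s = 0 ∧ (6 - m) * t = 0 := by
  obtain ⟨r, s, t, rfl⟩ := (hn.mem_zCenter_iff hdim).1 hz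
  rw [lie_add, hn.lie_central, lie_smul, ht.lie_h_e_smul ℂ, ← sub_eq_zero] at hm
  have hcoeff := Fintype.linearIndependent_iff.1 hn.linearIndependent_center
    ![(2 - m) * r, (6 - m) * s, (6 - m) * t] (by
      rw [← hm, Fin.sum_univ_three]
      simp only [Matrix.cons_val]
      module)
  exact ⟨r, s, t, rfl, hcoeff 0, hcoeff 1, hcoeff 2⟩

lemma mem_zCenter_inf_eigenspace_iff [FiniteDimensional ℂ L] (hn : IsNormalForm b h e)
    (hdim : finrank ℂ (centralizer L e) = 12) (ht : IsSl2Triple h e f) {z : L} :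
    z ∈ zCenter L e ⊓ End.eigenspace (ad ℂ L h) 6 ↔
      ∃ s t : ℂ, z = s • b (centralIndex 0) + t • b (centralIndex 1) := by
  rw [Submodule.mem_inf, End.mem_eigenspace_iff, ad_apply]
  constructor
  · rintro ⟨hz, hm⟩
    obtain ⟨r, s, t, rfl, hr, -, -⟩ := hn.exists_eq_of_lie_eq_smul hdim ht hz hm
    obtain rfl : r = 0 := (mul_eq_zero.1 hr).resolve_left (by norm_num)
    exact ⟨s, t, by simp⟩
  · rintro ⟨s, t, rfl⟩
    exact ⟨(hn.mem_zCenter_iff hdim).2 ⟨0, s, t, by simp⟩, hn.lie_central s t⟩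

lemma zCenter_inf_eigenspace_eq_span [FiniteDimensional ℂ L] (hn : IsNormalForm b h e)
    (hdim : finrank ℂ (centralizer L e) = 12) (ht : IsSl2Triple h e f) :
    zCenter L e ⊓ End.eigenspace (ad ℂ L h) 6 =
      Submodule.span ℂ (Set.range ![b (centralIndex 0), b (centralIndex 1)]) := by
  ext z
  rw [hn.mem_zCenter_inf_eigenspace_iff hdim ht, Submodule.mem_span_range_iff_exists_fun]
  constructor
  · rintro ⟨s, t, rfl⟩
    exact ⟨![s, t], by simp⟩
  · rintro ⟨c, rfl⟩
    exact ⟨c 0, c 1, by simp⟩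

lemma exists_eigenvector_iff [FiniteDimensional ℂ L] (hn : IsNormalForm b h e)
    (hdim : finrank ℂ (centralizer L e) = 12) (ht : IsSl2Triple h e f) (m : ℂ) :
    (∃ z : L, z ≠ 0 ∧ InCenterOfCentralizer L e z ∧ ⁅h, z⁆ = m • z) ↔ m ∈ ({2, 6} : Set ℂ) := by
  constructor
  · rintro ⟨z, hz0, hz, hm⟩
    obtain ⟨r, s, t, rfl, hr, hs, ht⟩ := hn.exists_eq_of_lie_eq_smul hdim ht hz hm
    by_contra! hm'
    simp only [Set.mem_insert_iff, Set.mem_singleton_iff, not_or] at hm'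
    have h2 : 2 - m ≠ 0 := sub_ne_zero.2 (Ne.symm hm'.1)
    have h6 : 6 - m ≠ 0 := sub_ne_zero.2 (Ne.symm hm'.2)
    simp_all
  · rintro (rfl | rfl)
    · exact ⟨e, ht.e_ne_zero, (hn.mem_zCenter_iff hdim).2 ⟨1, 0, 0, by simp⟩, ht.lie_h_e_smul ℂ⟩
    · have hmem : b (centralIndex 0) ∈ zCenter L e ⊓ End.eigenspace (ad ℂ L h) 6 :=
        (hn.mem_zCenter_inf_eigenspace_iff hdim ht).2 ⟨1, 0, by simp⟩
      exact ⟨_, b.ne_zero _, hmem.1, End.mem_eigenspace_iff.1 hmem.2⟩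

lemma lie_levelZeroComb (hn : IsNormalForm b h e) (i : Fin 3) (β γ : ℂ) :
    ⁅eval b (levelZeroComb i), β • b (centralIndex 0) + γ • b (centralIndex 1)⁆ =
      (β * levelZeroAction i 0 0 + γ * levelZeroAction i 1 0) • b (centralIndex 0) +
        (β * levelZeroAction i 0 1 + γ * levelZeroAction i 1 1) • b (centralIndex 1) := by
  have hlie (j : Fin 2) := hn.isModel.lie_eval (hasBracket_levelZeroComb_centralIndex i j)
  simp only [eval_cons, eval_nil, Int.cast_one, one_smul, add_zero,
    ← Int.cast_smul_eq_zsmul ℂ] at hlie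
  rw [lie_add, lie_smul, lie_smul, hlie, hlie]
  module

lemma exists_lie_f_eq_levelZeroComb (hn : IsNormalForm b h e) (ht : IsSl2Triple h e f)
    (hzero : ∀ x : L, ⁅e, x⁆ = 0 → ⁅h, x⁆ = 0 → x = 0) (i : Fin 3) :
    ∃ x : L, ⁅x, e⁆ = 0 ∧ ⁅f, x⁆ = eval b (levelZeroComb i) := by
  have hlie : ⁅⁅e, eval b (levelZeroComb i)⁆, e⁆ = 0 := by
    obtain ⟨j, hj⟩ := exists_hasBracket_nilpotentComb_levelZeroComb i
    rw [hn.nilpotent_eq, hn.isModel.lie_eval hj,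
      hn.isModel.lie_eval (hasBracket_centralizerComb_nilpotentComb j), eval_nil]
  have hweight : ⁅h, eval b (levelZeroComb i)⁆ = 0 := by
    have hmem := hn.isModel.eval_mem_adEigenspace (weightAt_levelZeroComb i)
    rw [← hn.neutral_eq, Int.cast_zero] at hmem
    exact mem_adEigenspace_zero.1 hmem
  refine ⟨(2⁻¹ : ℂ) • ⁅e, eval b (levelZeroComb i)⁆, by rw [smul_lie, hlie, smul_zero], ?_⟩
  rw [lie_smul, lie_f_lie_e_eq_two_smul ht hzero hweight (lie_eq_zero_comm.1 hlie),
    inv_smul_smul₀ two_ne_zero]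

lemma lie_lie_f_central_eq_zero (hn : IsNormalForm b h e) (ht : IsSl2Triple h e f)
    (s t β γ : ℂ) : ⁅⁅f, s • b (centralIndex 0) + t • b (centralIndex 1)⁆,
      β • b (centralIndex 0) + γ • b (centralIndex 1)⁆ = 0 := by
  have hf : f ∈ adEigenspace h (-2) :=
    mem_adEigenspace.2 (by rw [ht.lie_lie_smul_f ℂ, neg_smul])
  have hmem := lie_mem_adEigenspace
    (lie_mem_adEigenspace hf (mem_adEigenspace.2 (hn.lie_central s t)) rfl)
    (mem_adEigenspace.2 (hn.lie_central β γ)) (c := ((10 : ℤ) : ℂ)) (by norm_num)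
  rw [eq_sum_of_mem_adEigenspace hn.lie_basis hmem,
    Finset.filter_eq_empty_iff.2 fun k _ => weightAt_ne_ten k, Finset.sum_empty]

end IsNormalForm

lemma exists_levelZeroAction_eq {β γ : ℂ} (h0 : ¬ (β = 0 ∧ γ = 0)) (s t : ℂ) :
    ∃ c : Fin 3 → ℂ,
      ∑ i, c i * (β * levelZeroAction i 0 0 + γ * levelZeroAction i 1 0) = s ∧
      ∑ i, c i * (β * levelZeroAction i 0 1 + γ * levelZeroAction i 1 1) = t := by
  suffices ∃ c₀ c₁ c₂ : ℂ,
      c₁ * (2 * β - γ) - 3 * c₂ * β = s ∧ c₀ * (β - 2 * γ) - 3 * c₂ * γ = t by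
    obtain ⟨c₀, c₁, c₂, rfl, rfl⟩ := this
    refine ⟨![c₀, c₁, c₂], ?_, ?_⟩ <;> simp [Fin.sum_univ_three, levelZeroAction] <;> ring
  by_cases h1 : β - 2 * γ = 0
  · obtain rfl : β = 2 * γ := sub_eq_zero.1 h1
    have hγ : γ ≠ 0 := by rintro rfl; simp at h0
    exact ⟨0, (s - 2 * t) / (3 * γ), -t / (3 * γ), by field_simp; ring, by field_simp; ring⟩
  by_cases h2 : 2 * β - γ = 0
  · obtain rfl : 2 * β = γ := sub_eq_zero.1 h2
    have hβ : β ≠ 0 := by rintro rfl; simp at h0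
    exact ⟨(t - 2 * s) / (-3 * β), 0, -s / (3 * β), by field_simp; ring, by field_simp; ring⟩
  · exact ⟨t / (β - 2 * γ), s / (2 * β - γ), 0, by field_simp; ring, by field_simp; ring⟩

namespace IsNormalForm

lemma exists_lie_lie_f_central_eq (hn : IsNormalForm b h e) (ht : IsSl2Triple h e f)
    (hzero : ∀ x : L, ⁅e, x⁆ = 0 → ⁅h, x⁆ = 0 → x = 0) {β γ : ℂ} (h0 : ¬ (β = 0 ∧ γ = 0))
    (s t : ℂ) :
    ∃ x : L, ⁅x, e⁆ = 0 ∧ ⁅⁅f, x⁆, β • b (centralIndex 0) + γ • b (centralIndex 1)⁆ =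
      s • b (centralIndex 0) + t • b (centralIndex 1) := by
  obtain ⟨c, rfl, rfl⟩ := exists_levelZeroAction_eq h0 s t
  choose x hx hfx using hn.exists_lie_f_eq_levelZeroComb ht hzero
  refine ⟨∑ i, c i • x i, by simp [sum_lie, hx], ?_⟩
  simp only [lie_sum, lie_smul, hfx, sum_lie, smul_lie, hn.lie_levelZeroComb, Finset.sum_smul,
    ← Finset.sum_add_distrib, smul_add, smul_smul]

-- If `v` has no component along `e`, then the top eigenspace is reached from elements `⁅f, x⁆` of
-- degree zero, and otherwise from `⁅f, z⁆` with `z` in it, as `⁅⁅f, z⁆, e⁆` is a multiple of `z`.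
theorem propertyP [FiniteDimensional ℂ L] (hn : IsNormalForm b h e)
    (hdim : finrank ℂ (centralizer L e) = 12) (ht : IsSl2Triple h e f)
    (hzero : ∀ x : L, ⁅e, x⁆ = 0 → ⁅h, x⁆ = 0 → x = 0) : PropertyP L e h f := by
  intro m hm hmax v hv hv0 z hz hmz
  obtain rfl : m = 6 := by
    refine ((hn.exists_eigenvector_iff hdim ht m).1 hm).resolve_left ?_
    rintro rfl
    have hle := (Complex.le_def.1 (hmax 6 ((hn.exists_eigenvector_iff hdim ht 6).2 (by simp)))).1
    norm_num at hle
  obtain ⟨s, t, rfl⟩ := (hn.mem_zCenter_inf_eigenspace_iff hdim ht).1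
    ⟨hz, End.mem_eigenspace_iff.2 hmz⟩
  obtain ⟨r, β, γ, rfl⟩ := (hn.mem_zCenter_iff hdim).1 hv
  rcases eq_or_ne r 0 with rfl | hr
  · rw [zero_smul, zero_add] at hv0 ⊢
    exact hn.exists_lie_lie_f_central_eq ht hzero (by rintro ⟨rfl, rfl⟩; simp at hv0) s t
  · exact exists_lie_lie_f_eq_of_lie_lie_f_eq_zero ht (by norm_num) hr hz.1 hmz
      (hn.lie_lie_f_central_eq_zero ht s t β γ)

end IsNormalForm

end F4Model
end CenterOfCentralizer

/-- For the distinguished nilpotent orbit of `F₄` with `dim 𝔤^e = 12`: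
`dim 𝔷(𝔤^e) = 3`, the eigenvalues of `ad h` on `𝔷(𝔤^e)` are `2` and `6` with the
eigenvalue `6` of multiplicity `2`, and `e` satisfies property (P). -/
theorem f4_orbit_propertyP
    (L : Type*) [LieRing L] [LieAlgebra ℂ L] [FiniteDimensional ℂ L]
    [LieAlgebra.IsSimple ℂ L] (htype : Nonempty (L ≃ₗ⁅ℂ⁆ LieAlgebra.f₄ ℂ))
    (e h f : L) (ht : IsSl2Triple h e f) (he : IsNilpotent (LieAlgebra.ad ℂ L e))
    (hdist : IsDistinguished L e)
    (hdim : Module.finrank ℂ ↥(centralizer L e) = 12) :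
    Module.finrank ℂ ↥(zCenter L e) = 3 ∧
    (∀ m : ℂ, (∃ z : L, z ≠ 0 ∧ InCenterOfCentralizer L e z ∧ ⁅h, z⁆ = m • z) ↔
      m ∈ ({2, 6} : Set ℂ)) ∧
    Module.finrank ℂ
      ↥(zCenter L e ⊓ Module.End.eigenspace (LieAlgebra.ad ℂ L h) (6 : ℂ)) = 2 ∧
    PropertyP L e h f := by
  obtain ⟨b₀, hb₀⟩ := F4Model.exists_isModel_basis htype.some
  obtain ⟨b, hb⟩ := F4Model.exists_isNormalForm hb₀ ht hdist hdim
  have hli := hb.linearIndependent_center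
  refine ⟨?_, hb.exists_eigenvector_iff hdim ht, ?_,
    hb.propertyP hdim ht (hdist.isSemisimple_ad_and_eq_zero ht).2⟩
  · rw [hb.zCenter_eq_span hdim, finrank_span_eq_card hli, Fintype.card_fin]
  · rw [hb.zCenter_inf_eigenspace_eq_span hdim ht,
      finrank_span_eq_card (b := ![b (F4Model.centralIndex 0), b (F4Model.centralIndex 1)])
        (hli.comp Fin.succ (Fin.succ_injective _)), Fintype.card_fin]
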